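/- arXiv:2112.14803 — 5 statements merged into one kernel-verified Lean document; each statement's English description precedes it below -/
import Mathlib

section
/- Let q ≥ 8 be an even prime power. The UΓ-lines of the twisted cubic C form exactly two orbits under G_q, of sizes q + 1 and q² − 1: the orbit of size q + 1 is the orbit of the line ℓ1 through (0:0:0:1) and (0:1:0:0), and the orbit of size q² − 1 is the orbit of the line ℓ2 through (0:0:0:1) and (0:1:1:0). The stabilizer in G_q of ℓ1 has order q(q−1) and consists exactly of the projectivities induced by the matrices with rows (1,c,c²,c³), (0,d,0,c²d), (0,0,d²,cd²), (0,0,0,d³) with c ∈ F_q, d ∈ F_q^*; the stabilizer in G_q of ℓ2 has order q and consists exactly of the projectivities induced by the matrices with rows (1,c,c²,c³), (0,1,0,c²), (0,0,1,c), (0,0,0,1) with c ∈ F_q. -/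
open Matrix Submodule

noncomputable section

/-- Row-vector action of an invertible matrix on subspaces of `F^4`:
a projectivity of `PG(3,q)` induced by the matrix. -/
def projAct (F : Type) [Field F] (A : GL (Fin 4) F) :
    Submodule F (Fin 4 → F) → Submodule F (Fin 4 → F) :=
  fun W => W.map (Matrix.vecMulLinear (A : Matrix (Fin 4) (Fin 4) F))

/-- Representative vectors of the points of the twisted cubic. -/
def cubicVecs (F : Type) [Field F] : Set (Fin 4 → F) :=
  {v | (∃ t : F, v = ![t ^ 3, t ^ 2, t, 1]) ∨ v = ![1, 0, 0, 0]}

/-- The twisted cubic, as a set of projective points (1-dimensional subspaces). -/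
def twistedCubic (F : Type) [Field F] : Set (Submodule F (Fin 4 → F)) :=
  (fun v => Submodule.span F {v}) '' cubicVecs F

/-- The group `G_q` of projectivities fixing the twisted cubic, modeled as those maps
on subspaces that are induced by an invertible matrix and map the cubic onto itself. -/
def Gq (F : Type) [Field F] :
    Set ((Submodule F (Fin 4 → F)) → (Submodule F (Fin 4 → F))) :=
  {f | (∃ A : GL (Fin 4) F, f = projAct F A) ∧ f '' twistedCubic F = twistedCubic F}

def isPoint (F : Type) [Field F] (W : Submodule F (Fin 4 → F)) : Prop :=
  Module.finrank F W = 1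

def isLine (F : Type) [Field F] (W : Submodule F (Fin 4 → F)) : Prop :=
  Module.finrank F W = 2

/-- The orbit of a line under `G_q`. -/
def lineOrbit (F : Type) [Field F] (ℓ : Submodule F (Fin 4 → F)) :
    Set (Submodule F (Fin 4 → F)) :=
  {m | ∃ f ∈ Gq F, f ℓ = m}

/-- The stabilizer of a line in `G_q`. -/
def lineStab (F : Type) [Field F] (ℓ : Submodule F (Fin 4 → F)) :
    Set ((Submodule F (Fin 4 → F)) → (Submodule F (Fin 4 → F))) :=
  {f ∈ Gq F | f ℓ = ℓ}

/-- The linear form `y ↦ c0 y0 + c1 y1 + c2 y2 + c3 y3` defining a plane. -/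
def planeForm (F : Type) [Field F] (c : Fin 4 → F) : (Fin 4 → F) →ₗ[F] F where
  toFun y := c 0 * y 0 + c 1 * y 1 + c 2 * y 2 + c 3 * y 3
  map_add' a b := by simp only [Pi.add_apply]; ring
  map_smul' r a := by simp only [Pi.smul_apply, smul_eq_mul, RingHom.id_apply]; ring

/-- The plane `π(c0,c1,c2,c3)`. -/
def planeOf (F : Type) [Field F] (c : Fin 4 → F) : Submodule F (Fin 4 → F) :=
  LinearMap.ker (planeForm F c)

/-- The null polarity `𝔄`: the polar subspace of `W` w.r.t. the bilinear form
sending a point `(x0:x1:x2:x3)` to the plane `π(x3, −3x2, 3x1, −x0)`. -/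
def nullPolarity (F : Type) [Field F] (W : Submodule F (Fin 4 → F)) :
    Submodule F (Fin 4 → F) :=
  ⨅ x ∈ (W : Set (Fin 4 → F)), planeOf F ![x 3, -(3 * x 2), 3 * x 1, -(x 0)]

/-- The tangent line to the twisted cubic at `P(t)`, `t ∈ F`. -/
def tangentAt (F : Type) [Field F] (t : F) : Submodule F (Fin 4 → F) :=
  Submodule.span F {![t ^ 3, t ^ 2, t, 1], ![3 * t ^ 2, 2 * t, 1, 0]}

/-- The tangent line to the twisted cubic at `P(∞)`. -/
def tangentAtInf (F : Type) [Field F] : Submodule F (Fin 4 → F) :=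
  Submodule.span F {![1, 0, 0, 0], ![0, 1, 0, 0]}

def isTangent (F : Type) [Field F] (ℓ : Submodule F (Fin 4 → F)) : Prop :=
  (∃ t : F, ℓ = tangentAt F t) ∨ ℓ = tangentAtInf F

/-- The osculating plane at `P(t)`, `t ∈ F`. -/
def oscPlane (F : Type) [Field F] (t : F) : Submodule F (Fin 4 → F) :=
  planeOf F ![1, -(3 * t), 3 * t ^ 2, -(t ^ 3)]

/-- The osculating plane at `P(∞)`. -/
def oscPlaneInf (F : Type) [Field F] : Submodule F (Fin 4 → F) :=
  planeOf F ![0, 0, 0, 1]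

def isOscPlane (F : Type) [Field F] (π : Submodule F (Fin 4 → F)) : Prop :=
  (∃ t : F, π = oscPlane F t) ∨ π = oscPlaneInf F

/-- A real chord: the line joining two distinct points of the twisted cubic. -/
def isRealChord (F : Type) [Field F] (ℓ : Submodule F (Fin 4 → F)) : Prop :=
  ∃ u ∈ cubicVecs F, ∃ v ∈ cubicVecs F,
    Submodule.span F {u} ≠ Submodule.span F {v} ∧ ℓ = Submodule.span F {u, v}

/-- A real axis: the intersection of two distinct osculating planes. -/
def isRealAxis (F : Type) [Field F] (ℓ : Submodule F (Fin 4 → F)) : Prop :=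
  ∃ π₁ π₂ : Submodule F (Fin 4 → F),
    isOscPlane F π₁ ∧ isOscPlane F π₂ ∧ π₁ ≠ π₂ ∧ ℓ = π₁ ⊓ π₂

/-- The `F_{q²}`-extension of a subspace of `F^4`. -/
def extendSub (F K : Type) [Field F] [Field K] [Algebra F K]
    (W : Submodule F (Fin 4 → F)) : Submodule K (Fin 4 → K) :=
  Submodule.span K ((fun v i => algebraMap F K (v i)) '' (W : Set (Fin 4 → F)))

/-- An external line: a line containing no point of the twisted cubic. -/
def isExternal (F : Type) [Field F] (ℓ : Submodule F (Fin 4 → F)) : Prop :=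
  isLine F ℓ ∧ ∀ P ∈ twistedCubic F, ¬ P ≤ ℓ

/-- An imaginary chord: a line disjoint from the cubic whose `F_{q²}`-extension joins a
pair of Frobenius-conjugate points `P(t)`, `P(t^q)` of the cubic over `F_{q²}`. -/
def isImagChord (F K : Type) [Field F] [Field K] [Algebra F K] (q : ℕ)
    (ℓ : Submodule F (Fin 4 → F)) : Prop :=
  isExternal F ℓ ∧
  ∃ t : K, t ∉ Set.range (algebraMap F K) ∧
    extendSub F K ℓ =
      Submodule.span K
        ({![t ^ 3, t ^ 2, t, 1], ![(t ^ q) ^ 3, (t ^ q) ^ 2, t ^ q, 1]} :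
          Set (Fin 4 → K))

/-- An imaginary axis: a line whose `F_{q²}`-extension is the intersection of a pair of
Frobenius-conjugate osculating planes `π_osc(t)`, `π_osc(t^q)` over `F_{q²}`. -/
def isImagAxis (F K : Type) [Field F] [Field K] [Algebra F K] (q : ℕ)
    (ℓ : Submodule F (Fin 4 → F)) : Prop :=
  isLine F ℓ ∧
  ∃ t : K, t ∉ Set.range (algebraMap F K) ∧
    extendSub F K ℓ =
      planeOf K ![1, -(3 * t), 3 * t ^ 2, -(t ^ 3)] ⊓
        planeOf K ![1, -(3 * t ^ q), 3 * (t ^ q) ^ 2, -((t ^ q) ^ 3)]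

/-- A unisecant: a line meeting the twisted cubic in exactly one point. -/
def isUnisecant (F : Type) [Field F] (ℓ : Submodule F (Fin 4 → F)) : Prop :=
  isLine F ℓ ∧ ∃! P, P ∈ twistedCubic F ∧ P ≤ ℓ

/-- A `UΓ`-line: a non-tangent unisecant lying in some osculating plane. -/
def isUGamma (F : Type) [Field F] (ℓ : Submodule F (Fin 4 → F)) : Prop :=
  isUnisecant F ℓ ∧ ¬ isTangent F ℓ ∧ ∃ π, isOscPlane F π ∧ ℓ ≤ π

/-- A `UnΓ`-line: a non-tangent unisecant lying in no osculating plane. -/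
def isUnGamma (F : Type) [Field F] (ℓ : Submodule F (Fin 4 → F)) : Prop :=
  isUnisecant F ℓ ∧ ¬ isTangent F ℓ ∧ ∀ π, isOscPlane F π → ¬ ℓ ≤ π

/-- An `EΓ`-line: an external line, other than an imaginary chord, lying in some
osculating plane. -/
def isEGamma (F K : Type) [Field F] [Field K] [Algebra F K] (q : ℕ)
    (ℓ : Submodule F (Fin 4 → F)) : Prop :=
  isExternal F ℓ ∧ ¬ isImagChord F K q ℓ ∧ ∃ π, isOscPlane F π ∧ ℓ ≤ π

/-- For `q ≡ 0 (mod 3)`: the axis of `Γ`, the line `x0 = x3 = 0`. -/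
def axisLine (F : Type) [Field F] : Submodule F (Fin 4 → F) :=
  Submodule.span F {![0, 1, 0, 0], ![0, 0, 1, 0]}

/-- For `q ≡ 0 (mod 3)`: an `EA`-line, i.e. an external line, other than an imaginary
chord and other than the axis of `Γ`, meeting the axis of `Γ`. -/
def isEA (F K : Type) [Field F] [Field K] [Algebra F K] (q : ℕ)
    (ℓ : Submodule F (Fin 4 → F)) : Prop :=
  isExternal F ℓ ∧ ¬ isImagChord F K q ℓ ∧ ℓ ≠ axisLine F ∧ ℓ ⊓ axisLine F ≠ ⊥

end


section helpers

variable {F : Type} [Field F]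

def pm (M : Matrix (Fin 4) (Fin 4) F) (W : Submodule F (Fin 4 → F)) : Submodule F (Fin 4 → F) :=
  W.map (Matrix.vecMulLinear M)

lemma projAct_eq (A : GL (Fin 4) F) : projAct F A = pm (A : Matrix (Fin 4) (Fin 4) F) := rfl

lemma pm_pm (M N : Matrix (Fin 4) (Fin 4) F) (W : Submodule F (Fin 4 → F)) :
    pm M (pm N W) = pm (N * M) W := by
  unfold pm
  rw [← Submodule.map_comp]
  congr 1
  refine LinearMap.ext fun v => ?_
  simp [Matrix.vecMul_vecMul]

lemma pm_one (W : Submodule F (Fin 4 → F)) : pm 1 W = W := by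
  unfold pm
  convert Submodule.map_id W
  ext v i
  simp

lemma pm_smul (a : F) (ha : a ≠ 0) (M : Matrix (Fin 4) (Fin 4) F) : pm (a • M) = pm M := by
  funext W
  unfold pm
  rw [← Submodule.map_smul (Matrix.vecMulLinear M) W a ha]
  congr 1
  ext v i
  simp [Matrix.vecMul_smul]

lemma pm_span1 (M : Matrix (Fin 4) (Fin 4) F) (v : Fin 4 → F) :
    pm M (span F {v}) = span F {v ᵥ* M} := by
  simp [pm, Submodule.map_span]

lemma pm_span2 (M : Matrix (Fin 4) (Fin 4) F) (v w : Fin 4 → F) :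
    pm M (span F {v, w}) = span F {v ᵥ* M, w ᵥ* M} := by
  simp [pm, Submodule.map_span, Set.image_pair]

def borM (c d : F) : Matrix (Fin 4) (Fin 4) F :=
  !![1, c, c ^ 2, c ^ 3;
             0, d, 0, c ^ 2 * d;
             0, 0, d ^ 2, c * d ^ 2;
             0, 0, 0, d ^ 3]

def repM : Option F → Matrix (Fin 4) (Fin 4) F
  | some t => !![1, 0, 0, 0; t, 1, 0, 0; t ^ 2, 0, 1, 0; t ^ 3, t ^ 2, t, 1]
  | none => !![0, 0, 0, 1; 0, 0, 1, 0; 0, 1, 0, 0; 1, 0, 0, 0]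

def ptv : Option F → (Fin 4 → F)
  | some t => ![t ^ 3, t ^ 2, t, 1]
  | none => ![1, 0, 0, 0]

def dirv : Option F → F → (Fin 4 → F)
  | some t, m => ![t + m * t ^ 2, 1, m, 0]
  | none, m => ![0, m, 1, 0]

def Lin (o : Option F) (m : F) : Submodule F (Fin 4 → F) := span F {ptv o, dirv o m}

lemma mem_cubic (P : Submodule F (Fin 4 → F)) :
    P ∈ twistedCubic F ↔ ∃ o : Option F, P = span F {ptv o} := by
  unfold twistedCubic cubicVecs
  constructor
  · rintro ⟨v, (⟨t, rfl⟩ | rfl), rfl⟩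
    · exact ⟨some t, rfl⟩
    · exact ⟨none, rfl⟩
  · rintro ⟨o, rfl⟩
    rcases o with _ | t
    · exact ⟨_, Or.inr rfl, rfl⟩
    · exact ⟨_, Or.inl ⟨t, rfl⟩, rfl⟩

lemma det_bor (c d : F) : (borM c d).det = d ^ 6 := by
  simp [borM, Matrix.det_succ_row_zero, Fin.sum_univ_succ, Fin.succAbove]
  ring

lemma rep_inv (h2 : (2 : F) = 0) (o : Option F) : repM o * repM o = 1 := by
  rcases o with _ | t <;> ext i j <;> fin_cases i <;> fin_cases j <;>
    simp [repM, Matrix.mul_apply, Fin.sum_univ_succ] <;> grind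

lemma bor_inv (h2 : (2 : F) = 0) (c : F) : borM c 1 * borM c 1 = 1 := by
  ext i j; fin_cases i <;> fin_cases j <;>
    simp [borM, Matrix.mul_apply, Fin.sum_univ_succ] <;> grind

lemma bor_mul (c d : F) : borM 0 d * borM c 1 = borM c d := by
  ext i j; fin_cases i <;> fin_cases j <;>
    simp [borM, Matrix.mul_apply, Fin.sum_univ_succ] <;> ring

lemma ptv_ne (o : Option F) : ptv o ≠ 0 := by
  rcases o with _ | t
  · intro h; simpa [ptv] using congrFun h 0
  · intro h; simpa [ptv] using congrFun h 3

lemma span1_eq_of {v w : Fin 4 → F} (hw : w ≠ 0) (h : w ∈ span F {v}) : span F {w} = span F {v} := by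
  obtain ⟨a, rfl⟩ := mem_span_singleton.1 h
  have ha : a ≠ 0 := by rintro rfl; simp at hw
  exact Submodule.span_singleton_smul_eq (IsUnit.mk0 a ha) v

lemma span1_eq_smul {v w : Fin 4 → F} (a : F) (ha : a ≠ 0) (h : w = a • v) :
    span F {w} = span F {v} := by
  subst h
  exact Submodule.span_singleton_smul_eq (IsUnit.mk0 a ha) v

lemma ptv_inj {o o' : Option F} (h : span F {ptv o} = span F {ptv o'}) : o = o' := by
  have hm : ptv o ∈ span F {ptv o'} := h ▸ mem_span_singleton_self _
  obtain ⟨a, ha⟩ := mem_span_singleton.1 hm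
  rcases o with _ | t <;> rcases o' with _ | s
  · rfl
  · have h3 := congrFun ha 3
    have h0 := congrFun ha 0
    simp [ptv] at h3 h0
    simp [h3] at h0
  · have h3 := congrFun ha 3
    simp [ptv] at h3
  · have h3 := congrFun ha 3
    have h2 := congrFun ha 2
    simp [ptv] at h3 h2
    simp [h3] at h2
    rw [h2]

lemma bor_pt (h2 : (2 : F) = 0) (c d : F) (hd : d ≠ 0) (o : Option F) :
    ∃ o', pm (borM c d) (span F {ptv o}) = span F {ptv o'} := by
  simp only [pm_span1]
  rcases o with _ | t
  · by_cases hc : c = 0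
    · refine ⟨none, ?_⟩
      congr 2
      subst hc
      ext i; fin_cases i <;> simp [ptv, borM, Matrix.vecMul, dotProduct, Fin.sum_univ_succ]
    · refine ⟨some (1 / c), span1_eq_smul (c ^ 3) (by positivity) ?_⟩
      ext i; fin_cases i <;> simp [ptv, borM, Matrix.vecMul, dotProduct, Fin.sum_univ_succ] <;>
        field_simp
  · by_cases hc : c * t + d = 0
    · refine ⟨none, span1_eq_smul (t ^ 3) ?_ ?_⟩
      · rintro h
        have : t = 0 := by simpa using h
        subst this
        simp at hc
        exact hd hc
      · ext i; fin_cases i <;> simp [ptv, borM, Matrix.vecMul, dotProduct, Fin.sum_univ_succ] <;> grind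
    · refine ⟨some (t / (c * t + d)), span1_eq_smul ((c * t + d) ^ 3) (pow_ne_zero _ hc) ?_⟩
      ext i; fin_cases i <;> simp [ptv, borM, Matrix.vecMul, dotProduct, Fin.sum_univ_succ] <;>
        field_simp <;> grind

lemma rep_pt (h2 : (2 : F) = 0) (p : Option F) (o : Option F) :
    ∃ o', pm (repM p) (span F {ptv o}) = span F {ptv o'} := by
  simp only [pm_span1]
  rcases p with _ | s
  · rcases o with _ | t
    · refine ⟨some 0, ?_⟩
      congr 2
      ext i; fin_cases i <;> simp [ptv, repM, Matrix.vecMul, dotProduct, Fin.sum_univ_succ]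
    · by_cases ht : t = 0
      · refine ⟨none, ?_⟩
        congr 2
        subst ht
        ext i; fin_cases i <;> simp [ptv, repM, Matrix.vecMul, dotProduct, Fin.sum_univ_succ]
      · refine ⟨some (1 / t), span1_eq_smul (t ^ 3) (pow_ne_zero _ ht) ?_⟩
        ext i; fin_cases i <;> simp [ptv, repM, Matrix.vecMul, dotProduct, Fin.sum_univ_succ] <;>
          field_simp
  · rcases o with _ | t
    · refine ⟨none, ?_⟩
      congr 2
      ext i; fin_cases i <;> simp [ptv, repM, Matrix.vecMul, dotProduct, Fin.sum_univ_succ]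
    · refine ⟨some (t + s), ?_⟩
      congr 2
      ext i; fin_cases i <;> simp [ptv, repM, Matrix.vecMul, dotProduct, Fin.sum_univ_succ] <;> grind

lemma rep_zero_pt (o : Option F) : pm (repM o) (span F {ptv (some 0)}) = span F {ptv o} := by
  rw [pm_span1]
  congr 2
  rcases o with _ | t <;> ext i <;> fin_cases i <;>
    simp [ptv, repM, Matrix.vecMul, dotProduct, Fin.sum_univ_succ]

lemma rep_lin (o : Option F) (m : F) : pm (repM o) (Lin (some 0) m) = Lin o m := by
  unfold Lin
  rw [pm_span2]
  congr 2
  · rcases o with _ | t <;> ext i <;> fin_cases i <;>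
      simp [ptv, repM, Matrix.vecMul, dotProduct, Fin.sum_univ_succ]
  · congr 1
    rcases o with _ | t <;> ext i <;> fin_cases i <;>
      simp [dirv, repM, Matrix.vecMul, dotProduct, Fin.sum_univ_succ]

lemma bor_lin (c d m : F) (hd : d ≠ 0) : pm (borM c d) (Lin (some 0) m) = Lin (some 0) (m * d) := by
  unfold Lin
  rw [pm_span2]
  apply le_antisymm
  · rw [span_le]
    rintro v (rfl | rfl)
    · refine mem_span_pair.2 ⟨d ^ 3, 0, ?_⟩
      ext i; fin_cases i <;> simp [ptv, dirv, borM, Matrix.vecMul, dotProduct, Fin.sum_univ_succ]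
    · refine mem_span_pair.2 ⟨c ^ 2 * d + m * (c * d ^ 2), d, ?_⟩
      ext i; fin_cases i <;> simp [ptv, dirv, borM, Matrix.vecMul, dotProduct, Fin.sum_univ_succ]
      ring
  · rw [span_le]
    rintro v (rfl | rfl)
    · refine mem_span_pair.2 ⟨1 / d ^ 3, 0, ?_⟩
      ext i; fin_cases i <;> simp [ptv, dirv, borM, Matrix.vecMul, dotProduct, Fin.sum_univ_succ]
      field_simp
    · refine mem_span_pair.2 ⟨- (c ^ 2 * d + m * (c * d ^ 2)) / d ^ 4, 1 / d, ?_⟩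
      ext i; fin_cases i <;> simp [ptv, dirv, borM, Matrix.vecMul, dotProduct, Fin.sum_univ_succ] <;>
      field_simp
      ring

lemma pm_injective {M N : Matrix (Fin 4) (Fin 4) F} (h : M * N = 1) : Function.Injective (pm M) := by
  intro V W hVW
  have := congrArg (pm N) hVW
  simpa [pm_pm, h, pm_one] using this

lemma cubic_zero [Fintype F] (hF : 8 ≤ Fintype.card F) (k0 k1 k2 k3 : F)
    (h : ∀ t : F, t ≠ 0 → k0 + k1 * t + k2 * t ^ 2 + k3 * t ^ 3 = 0) :
    k0 = 0 ∧ k1 = 0 ∧ k2 = 0 ∧ k3 = 0 := by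
  classical
  let p : Polynomial F := .C k0 + .C k1 * .X + .C k2 * .X ^ 2 + .C k3 * .X ^ 3
  have hp : p = 0 := by
    apply Polynomial.eq_zero_of_natDegree_lt_card_of_eval_eq_zero' p (Finset.univ.erase (0 : F))
    · intro t ht
      have := h t (Finset.ne_of_mem_erase ht)
      simpa [p] using this
    · rw [Finset.card_erase_of_mem (Finset.mem_univ _), Finset.card_univ]
      have : p.natDegree ≤ 3 := by simp only [p]; compute_degree
      omega
  have hc := fun n => congrArg (fun r => Polynomial.coeff r n) hp
  refine ⟨?_, ?_, ?_, ?_⟩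
  · simpa [p, Polynomial.coeff_X, Polynomial.coeff_C] using hc 0
  · simpa [p, Polynomial.coeff_X, Polynomial.coeff_C] using hc 1
  · simpa [p, Polynomial.coeff_X, Polynomial.coeff_C] using hc 2
  · simpa [p, Polynomial.coeff_X, Polynomial.coeff_C] using hc 3

lemma diag_lemma [Fintype F] (hF : 8 ≤ Fintype.card F) (h2 : (2 : F) = 0)
    (A : Matrix (Fin 4) (Fin 4) F) (hA : A.det ≠ 0)
    (h0 : pm A (span F {ptv (some 0)}) = span F {ptv (some 0)})
    (hinf : pm A (span F {ptv none}) = span F {ptv none})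
    (hC : ∀ o : Option F, ∃ o', pm A (span F {ptv o}) = span F {ptv o'}) :
    ∃ d, d ≠ 0 ∧ pm A = pm (borM 0 d) := by
  rw [pm_span1] at h0 hinf
  have e0 : ∃ a : F, a • ptv none = (ptv none : Fin 4 → F) ᵥ* A :=
    mem_span_singleton.1 (hinf ▸ mem_span_singleton_self _)
  have e3 : ∃ a : F, a • ptv (some 0) = (ptv (some 0) : Fin 4 → F) ᵥ* A :=
    mem_span_singleton.1 (h0 ▸ mem_span_singleton_self _)
  obtain ⟨a, ha⟩ := e0
  obtain ⟨d, hd⟩ := e3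
  have r0 : ∀ i, A 0 i = a * (ptv none : Fin 4 → F) i := fun i => by
    have := congrFun ha i
    simpa [ptv, Matrix.vecMul, dotProduct, Fin.sum_univ_succ] using this.symm
  have r3 : ∀ i, A 3 i = d * (ptv (some 0) : Fin 4 → F) i := fun i => by
    have := congrFun hd i
    simpa [ptv, Matrix.vecMul, dotProduct, Fin.sum_univ_succ] using this.symm
  have a00 : A 0 0 = a := by simp [r0, ptv]
  have a01 : A 0 1 = 0 := by simp [r0, ptv]
  have a02 : A 0 2 = 0 := by simp [r0, ptv]
  have a03 : A 0 3 = 0 := by simp [r0, ptv]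
  have a30 : A 3 0 = 0 := by simp [r3, ptv]
  have a31 : A 3 1 = 0 := by simp [r3, ptv]
  have a32 : A 3 2 = 0 := by simp [r3, ptv]
  have a33 : A 3 3 = d := by simp [r3, ptv]
  have hdet : A.det = a * d * (A 1 1 * A 2 2 - A 1 2 * A 2 1) := by
    simp [Matrix.det_succ_row_zero, Fin.sum_univ_succ, Fin.succAbove, a01, a02, a03, a00]
    simp [show (Fin.succ 1 : Fin 4) = 2 from rfl, show (Fin.succ 2 : Fin 4) = 3 from rfl, show (Fin.succ 1 : Fin 3) = 2 from rfl, a30, a31, a32, a33]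
    ring
  have key : ∀ t : F, t ≠ 0 →
      (A 1 1 * t + A 2 1) ^ 2 = (a * t ^ 2 + A 1 0 * t + A 2 0) * (A 1 2 * t + A 2 2) ∧
      t * (A 1 2 * t + A 2 2) ^ 2 = (A 1 1 * t + A 2 1) * (A 1 3 * t ^ 2 + A 2 3 * t + d) := by
    intro t ht
    obtain ⟨o', ho'⟩ := hC (some t)
    rw [pm_span1] at ho'
    obtain ⟨k, hk⟩ : ∃ k : F, k • ptv o' = (ptv (some t) : Fin 4 → F) ᵥ* A :=
      mem_span_singleton.1 (ho' ▸ mem_span_singleton_self _)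
    have pts : (ptv (some t) : Fin 4 → F) = ![t ^ 3, t ^ 2, t, 1] := rfl
    have x0 : k * ptv o' 0 = a * t ^ 3 + A 1 0 * t ^ 2 + A 2 0 * t := by
      have := congrFun hk 0
      simp [pts, Matrix.vecMul, dotProduct, Fin.sum_univ_succ, a00, show (Fin.succ 1 : Fin 4) = 2 from rfl, show (Fin.succ 2 : Fin 4) = 3 from rfl, a30] at this
      rw [this]; ring
    have x1 : k * ptv o' 1 = A 1 1 * t ^ 2 + A 2 1 * t := by
      have := congrFun hk 1
      simp [pts, Matrix.vecMul, dotProduct, Fin.sum_univ_succ, a01, show (Fin.succ 1 : Fin 4) = 2 from rfl, show (Fin.succ 2 : Fin 4) = 3 from rfl, a31] at this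
      rw [this]; ring
    have x2 : k * ptv o' 2 = A 1 2 * t ^ 2 + A 2 2 * t := by
      have := congrFun hk 2
      simp [pts, Matrix.vecMul, dotProduct, Fin.sum_univ_succ, a02, show (Fin.succ 1 : Fin 4) = 2 from rfl, show (Fin.succ 2 : Fin 4) = 3 from rfl, a32] at this
      rw [this]; ring
    have x3 : k * ptv o' 3 = A 1 3 * t ^ 2 + A 2 3 * t + d := by
      have := congrFun hk 3
      simp [pts, Matrix.vecMul, dotProduct, Fin.sum_univ_succ, a03, show (Fin.succ 1 : Fin 4) = 2 from rfl, show (Fin.succ 2 : Fin 4) = 3 from rfl, a33] at this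
      rw [this]; ring
    have q1 : (ptv o' 1) ^ 2 = ptv o' 0 * ptv o' 2 := by
      rcases o' with _ | s <;> simp [ptv]; ring
    have q2 : (ptv o' 2) ^ 2 = ptv o' 1 * ptv o' 3 := by
      rcases o' with _ | s <;> simp [ptv]
    constructor
    · apply mul_left_cancel₀ (pow_ne_zero 2 ht)
      have : (k * ptv o' 1) ^ 2 = (k * ptv o' 0) * (k * ptv o' 2) := by
        linear_combination k ^ 2 * q1
      rw [x0, x1, x2] at this
      linear_combination this
    · apply mul_left_cancel₀ ht
      have : (k * ptv o' 2) ^ 2 = (k * ptv o' 1) * (k * ptv o' 3) := by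
        linear_combination k ^ 2 * q2
      rw [x3, x1, x2] at this
      linear_combination this
  have ha0 : a ≠ 0 := by rintro rfl; simp [hdet] at hA
  have hd0 : d ≠ 0 := by rintro rfl; simp [hdet] at hA
  obtain ⟨k0, k1, k2, k3⟩ := cubic_zero hF (A 2 1 ^ 2 - A 2 0 * A 2 2)
    (2 * A 1 1 * A 2 1 - A 1 0 * A 2 2 - A 2 0 * A 1 2) (A 1 1 ^ 2 - a * A 2 2 - A 1 0 * A 1 2)
    (- (a * A 1 2)) (fun t ht => by linear_combination (key t ht).1)
  obtain ⟨l0, l1, l2, l3⟩ := cubic_zero hF (- (A 2 1 * d))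
    (A 2 2 ^ 2 - A 1 1 * d - A 2 1 * A 2 3) (2 * A 1 2 * A 2 2 - A 1 1 * A 2 3 - A 2 1 * A 1 3)
    (A 1 2 ^ 2 - A 1 1 * A 1 3) (fun t ht => by linear_combination (key t ht).2)
  have b2 : A 1 2 = 0 := by simpa [ha0] using k3
  have c1 : A 2 1 = 0 := by simpa [hd0] using l0
  rw [hdet, b2, c1] at hA
  simp only [mul_zero, sub_zero] at hA
  have b1 : A 1 1 ≠ 0 := fun h => by simp [h] at hA
  have c2 : A 2 2 ≠ 0 := fun h => by simp [h] at hA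
  have b0 : A 1 0 = 0 := by simpa [b2, c1, c2] using k1
  have c0 : A 2 0 = 0 := by simpa [b2, c1, c2] using k0
  have b3 : A 1 3 = 0 := by simpa [b2, c1, b1] using l3
  have c3 : A 2 3 = 0 := by simpa [b2, c1, b1] using l2
  simp only [b2, c1, mul_zero, zero_mul, sub_zero] at k2 l1
  have hc2 : A 2 2 = a * (A 1 1 / a) ^ 2 := by field_simp; linear_combination -k2
  have hdd : d = a * (A 1 1 / a) ^ 3 := by
    field_simp
    apply mul_left_cancel₀ b1
    linear_combination (-a ^ 2) * l1 + (-(A 1 1 ^ 2) - a * A 2 2) * k2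
  refine ⟨A 1 1 / a, div_ne_zero b1 ha0, ?_⟩
  rw [← pm_smul a ha0 (borM 0 (A 1 1 / a))]
  congr 1
  ext i j
  fin_cases i <;> fin_cases j <;>
    simp [borM, a00, a01, a02, a03, a30, a31, a32, a33, b2, c1, b0, c0, b3, c3]
  · field_simp
  · exact hc2
  · exact hdd

lemma mem_Gq_of [Fintype F] (A : GL (Fin 4) F)
    (h : ∀ o : Option F, ∃ o', pm (A : Matrix (Fin 4) (Fin 4) F) (span F {ptv o}) = span F {ptv o'}) :
    pm (A : Matrix (Fin 4) (Fin 4) F) ∈ Gq F := by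
  refine ⟨⟨A, rfl⟩, ?_⟩
  have hinj : Function.Injective (pm (A : Matrix (Fin 4) (Fin 4) F)) :=
    pm_injective (N := ((A⁻¹ : GL (Fin 4) F) : Matrix (Fin 4) (Fin 4) F)) (by
      rw [← Units.val_mul]; simp)
  apply Set.eq_of_subset_of_ncard_le
  · rintro _ ⟨P, hP, rfl⟩
    obtain ⟨o, rfl⟩ := (mem_cubic P).1 hP
    exact (mem_cubic _).2 (h o)
  · rw [Set.ncard_image_of_injective _ hinj]
  · exact Set.toFinite _

lemma pt_of_mem_Gq {M : Matrix (Fin 4) (Fin 4) F} (h : pm M ∈ Gq F) (o : Option F) :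
    ∃ o', pm M (span F {ptv o}) = span F {ptv o'} := by
  rw [← mem_cubic, ← h.2]
  exact ⟨_, (mem_cubic _).2 ⟨o, rfl⟩, rfl⟩

lemma gl_of_mul {M N : Matrix (Fin 4) (Fin 4) F} (h : M * N = 1) :
    ∃ A : GL (Fin 4) F, (A : Matrix (Fin 4) (Fin 4) F) = M :=
  ⟨⟨M, N, h, mul_eq_one_comm.1 h⟩, rfl⟩

lemma gl_bor (c d : F) (hd : d ≠ 0) :
    ∃ A : GL (Fin 4) F, (A : Matrix (Fin 4) (Fin 4) F) = borM c d :=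
  ⟨Matrix.GeneralLinearGroup.mkOfDetNeZero (borM c d) (by rw [det_bor]; exact pow_ne_zero _ hd), rfl⟩

lemma bor_mem [Fintype F] (h2 : (2 : F) = 0) (c d : F) (hd : d ≠ 0) : pm (borM c d) ∈ Gq F := by
  obtain ⟨A, hA⟩ := gl_bor c d hd
  rw [← hA]
  apply mem_Gq_of
  rw [hA]
  exact bor_pt h2 c d hd

lemma rep_mem [Fintype F] (h2 : (2 : F) = 0) (o : Option F) : pm (repM o) ∈ Gq F := by
  obtain ⟨A, hA⟩ := gl_of_mul (rep_inv h2 o)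
  rw [← hA]
  apply mem_Gq_of
  rw [hA]
  exact rep_pt h2 o

lemma comp_mem {f g : Submodule F (Fin 4 → F) → Submodule F (Fin 4 → F)}
    (hf : f ∈ Gq F) (hg : g ∈ Gq F) : f ∘ g ∈ Gq F := by
  obtain ⟨⟨A, rfl⟩, hA⟩ := hf
  obtain ⟨⟨B, rfl⟩, hB⟩ := hg
  refine ⟨⟨B * A, ?_⟩, ?_⟩
  · funext W
    simp [projAct_eq, pm_pm]
  · rw [Set.image_comp, hB, hA]

lemma stab0 [Fintype F] (hF : 8 ≤ Fintype.card F) (h2 : (2 : F) = 0)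
    {f : Submodule F (Fin 4 → F) → Submodule F (Fin 4 → F)} (hf : f ∈ Gq F)
    (h0 : f (span F {ptv (some 0)}) = span F {ptv (some 0)}) :
    ∃ c d, d ≠ 0 ∧ f = pm (borM c d) := by
  obtain ⟨⟨A, rfl⟩, hA⟩ := id hf
  rw [projAct_eq] at *
  have hAinv : (A : Matrix (Fin 4) (Fin 4) F) * ((A⁻¹ : GL (Fin 4) F) : Matrix (Fin 4) (Fin 4) F) = 1 := by
      rw [← Units.val_mul]; simp
  obtain ⟨o, ho⟩ := pt_of_mem_Gq hf none
  have hne : o ≠ some 0 := by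
    rintro rfl
    have := ptv_inj (pm_injective hAinv (ho.trans h0.symm))
    simp at this
  obtain ⟨c, hc⟩ : ∃ c : F, pm (borM c 1) (span F {ptv o}) = span F {ptv none} := by
    rcases o with _ | s
    · refine ⟨0, ?_⟩
      rw [pm_span1]; congr 2
      ext i; fin_cases i <;> simp [ptv, borM, Matrix.vecMul, dotProduct, Fin.sum_univ_succ]
    · have hs : s ≠ 0 := by rintro rfl; exact hne rfl
      refine ⟨1 / s, ?_⟩
      rw [pm_span1]
      refine span1_eq_smul (s ^ 3) (pow_ne_zero _ hs) ?_
      ext i; fin_cases i <;> simp [ptv, borM, Matrix.vecMul, dotProduct, Fin.sum_univ_succ] <;>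
        field_simp <;> grind
  have hg := comp_mem (bor_mem h2 c 1 one_ne_zero) hf
  have hge : pm (borM c 1) ∘ pm (A : Matrix (Fin 4) (Fin 4) F) = pm ((A : Matrix (Fin 4) (Fin 4) F) * borM c 1) := by
    funext W; simp [pm_pm]
  rw [hge] at hg
  obtain ⟨d, hd, hd'⟩ := diag_lemma hF h2 (A * borM c 1) (by
      rw [Matrix.det_mul, det_bor]
      simp only [one_pow, mul_one]
      exact (Matrix.isUnits_det_units A).ne_zero)
    (by
      rw [← pm_pm, h0, pm_span1]; congr 2
      ext i; fin_cases i <;> simp [ptv, borM, Matrix.vecMul, dotProduct, Fin.sum_univ_succ])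
    (by rw [← pm_pm, ho, hc])
    (pt_of_mem_Gq hg)
  refine ⟨c, d, hd, ?_⟩
  funext W
  rw [← bor_mul, ← pm_pm, ← hd', pm_pm, Matrix.mul_assoc, bor_inv h2, Matrix.mul_one]

lemma Gq_char [Fintype F] (hF : 8 ≤ Fintype.card F) (h2 : (2 : F) = 0)
    (f : Submodule F (Fin 4 → F) → Submodule F (Fin 4 → F)) :
    f ∈ Gq F ↔ ∃ o c d, d ≠ 0 ∧ f = pm (repM o) ∘ pm (borM c d) := by
  constructor
  · intro hf
    obtain ⟨o, ho⟩ : ∃ o, f (span F {ptv (some 0)}) = span F {ptv o} := by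
      rw [← mem_cubic, ← hf.2]
      exact ⟨_, (mem_cubic _).2 ⟨_, rfl⟩, rfl⟩
    obtain ⟨c, d, hd, h⟩ := stab0 hF h2 (comp_mem (rep_mem h2 o) hf) (by
      simp only [Function.comp]
      rw [ho, ← rep_zero_pt, pm_pm, rep_inv h2, pm_one])
    refine ⟨o, c, d, hd, ?_⟩
    rw [← h]
    funext W
    simp [pm_pm, rep_inv h2, pm_one]
  · rintro ⟨o, c, d, hd, rfl⟩
    exact comp_mem (rep_mem h2 o) (bor_mem h2 c d hd)

lemma Gq_lin [Fintype F] (o : Option F) (c d m : F) (hd : d ≠ 0) :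
    (pm (repM o) ∘ pm (borM c d)) (Lin (some 0) m) = Lin o (m * d) := by
  simp [bor_lin _ _ _ hd, rep_lin]

/-- the osculating form at a point -/
def oscv : Option F → (Fin 4 → F)
  | some t => ![1, -(3 * t), 3 * t ^ 2, -(t ^ 3)]
  | none => ![0, 0, 0, 1]

lemma osc_pt (o o' : Option F) (h : planeForm F (oscv o) (ptv o') = 0) : o = o' := by
  rcases o with _ | t <;> rcases o' with _ | s
  · rfl
  · simp [planeForm, oscv, ptv] at h
  · simp [planeForm, oscv, ptv] at h
  · simp [planeForm, oscv, ptv] at h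
    have : (s - t) ^ 3 = 0 := by linear_combination h
    have := pow_eq_zero_iff (n := 3) (by norm_num) |>.1 this
    rw [sub_eq_zero] at this
    rw [this]

lemma lin_osc (h2 : (2 : F) = 0) (o : Option F) (m : F) : Lin o m ≤ planeOf F (oscv o) := by
  unfold Lin
  rw [span_le]
  rintro v (rfl | rfl)
  · rcases o with _ | t <;> simp [planeOf, planeForm, oscv, ptv]
    ring
  · rcases o with _ | t <;> simp [planeOf, planeForm, oscv, dirv]
    linear_combination (-t + 2 * m * t ^ 2) * h2

lemma pt_mem_lin (o : Option F) (m : F) : ptv o ∈ Lin o m := subset_span (by simp)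

lemma lin_pt (h2 : (2 : F) = 0) {o o' : Option F} {m : F} (h : ptv o' ∈ Lin o m) : o = o' :=
  osc_pt o o' (lin_osc h2 o m h)

lemma lin_inj (h2 : (2 : F) = 0) {o o' : Option F} {m m' : F} (h : Lin o m = Lin o' m') :
    o = o' ∧ m = m' := by
  have ho : o = o' := lin_pt h2 (m := m) (h ▸ pt_mem_lin o' m')
  subst ho
  refine ⟨rfl, ?_⟩
  have hd : dirv o m ∈ Lin o m' := h ▸ subset_span (by simp)
  obtain ⟨a, b, hab⟩ := mem_span_pair.1 hd
  have h0 := congrFun hab 0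
  have h1 := congrFun hab 1
  have h2 := congrFun hab 2
  have h3 := congrFun hab 3
  rcases o with _ | t <;> simp [ptv, dirv] at h0 h1 h2 h3 <;> grind

def tanv : Option F → (Fin 4 → F)
  | some t => ![3 * t ^ 2, 2 * t, 1, 0]
  | none => ![0, 1, 0, 0]

lemma tan_iff (ℓ : Submodule F (Fin 4 → F)) :
    isTangent F ℓ ↔ ∃ o, ℓ = span F {ptv o, tanv o} := by
  constructor
  · rintro (⟨t, h⟩ | h)
    · exact ⟨some t, h⟩
    · exact ⟨none, h⟩
  · rintro ⟨_ | t, h⟩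
    · exact Or.inr h
    · exact Or.inl ⟨t, h⟩

lemma osc_iff (W : Submodule F (Fin 4 → F)) :
    isOscPlane F W ↔ ∃ o, W = planeOf F (oscv o) := by
  constructor
  · rintro (⟨t, h⟩ | h)
    · exact ⟨some t, h⟩
    · exact ⟨none, h⟩
  · rintro ⟨_ | t, h⟩
    · exact Or.inr h
    · exact Or.inl ⟨t, h⟩

lemma range_pair (v w : Fin 4 → F) : Set.range (![v, w] : Fin 2 → Fin 4 → F) = {v, w} := by
  ext x
  simp [Fin.exists_fin_two, eq_comm]
  tauto

lemma line_span {ℓ : Submodule F (Fin 4 → F)} (hℓ : isLine F ℓ) {v w : Fin 4 → F}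
    (hv : v ∈ ℓ) (hw : w ∈ ℓ) (hi : LinearIndependent F ![v, w]) : ℓ = span F {v, w} := by
  symm
  apply Submodule.eq_of_le_of_finrank_eq
  · rw [span_le]
    rintro x (rfl | rfl) <;> assumption
  · have := finrank_span_eq_card (b := (![v, w] : Fin 2 → Fin 4 → F)) hi
    rw [Fintype.card_fin, range_pair v w] at this
    rw [this, hℓ]

lemma pair_ind {o : Option F} {v : Fin 4 → F} (hv : v ∉ span F {ptv o}) :
    LinearIndependent F ![ptv o, v] := by
  rw [LinearIndependent.pair_iff' (ptv_ne o)]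
  intro a ha
  exact hv (mem_span_singleton.2 ⟨a, ha⟩)

lemma dir_notin (o : Option F) (m : F) : dirv o m ∉ span F {ptv o} := by
  intro h
  obtain ⟨a, ha⟩ := mem_span_singleton.1 h
  have h1 := congrFun ha 1
  have h2 := congrFun ha 2
  have h3 := congrFun ha 3
  rcases o with _ | t <;> simp [ptv, dirv] at h1 h2 h3
  simp [h3] at h1

lemma lin_isLine (o : Option F) (m : F) : isLine F (Lin o m) := by
  have := finrank_span_eq_card (b := (![ptv o, dirv o m] : Fin 2 → Fin 4 → F)) (pair_ind (dir_notin o m))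
  rw [Fintype.card_fin, range_pair (ptv o) (dirv o m)] at this
  exact this

lemma exists_dir {ℓ : Submodule F (Fin 4 → F)} (hℓ : isLine F ℓ) (o : Option F) :
    ∃ v ∈ ℓ, v ∉ span F {ptv o} := by
  by_contra! hcon
  have hle : ℓ ≤ span F {ptv o} := hcon
  have h1 := Submodule.finrank_mono hle
  rw [finrank_span_singleton (ptv_ne o)] at h1
  unfold isLine at hℓ
  omega

lemma ugamma_iff (h2 : (2 : F) = 0) (ℓ : Submodule F (Fin 4 → F)) :
    isUGamma F ℓ ↔ ∃ o m, ℓ = Lin o m := by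
  constructor
  · rintro ⟨⟨hl, P, ⟨hP, hPl⟩, -⟩, hT, π, hπ, hle⟩
    obtain ⟨o', rfl⟩ := (mem_cubic P).1 hP
    obtain ⟨o, rfl⟩ := (osc_iff π).1 hπ
    rw [span_singleton_le_iff_mem] at hPl
    obtain rfl : o = o' := osc_pt o o' (hle hPl)
    obtain ⟨v, hv, hvn⟩ := exists_dir hl o
    obtain ⟨x0, x1, x2, x3, rfl⟩ : ∃ x0 x1 x2 x3 : F, v = ![x0, x1, x2, x3] :=
      ⟨v 0, v 1, v 2, v 3, by ext i; fin_cases i <;> rfl⟩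
    have hfv : planeForm F (oscv o) ![x0, x1, x2, x3] = 0 := hle hv
    have hsp := line_span hl hPl hv (pair_ind hvn)
    rw [tan_iff] at hT
    rcases o with _ | t
    · simp [planeForm, oscv] at hfv
      by_cases h : x2 = 0
      · exfalso
        have h1 : x1 ≠ 0 := by
          intro h1
          refine hvn (mem_span_singleton.2 ⟨x0, ?_⟩)
          ext i; fin_cases i <;> simp [ptv, h, h1, hfv]
        refine hT ⟨none, line_span hl hPl ?_ ?_⟩
        · have : (tanv none : Fin 4 → F) = (1 / x1) • (![x0, x1, x2, x3] - x0 • ptv none) := by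
            ext i; fin_cases i <;> simp [tanv, ptv, h, h1, hfv]
          rw [this]
          exact ℓ.smul_mem _ (ℓ.sub_mem hv (ℓ.smul_mem _ hPl))
        · apply pair_ind
          intro hh
          obtain ⟨a, ha⟩ := mem_span_singleton.1 hh
          have := congrFun ha 1
          simp [ptv, tanv] at this
      · refine ⟨none, x1 / x2, line_span hl hPl ?_ (pair_ind (dir_notin _ _))⟩
        have : (dirv none (x1 / x2) : Fin 4 → F) = (1 / x2) • (![x0, x1, x2, x3] - x0 • ptv none) := by
            ext i; fin_cases i <;> simp [dirv, ptv, h, hfv] <;> field_simp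
        rw [this]
        exact ℓ.smul_mem _ (ℓ.sub_mem hv (ℓ.smul_mem _ hPl))
    · simp [planeForm, oscv] at hfv
      by_cases h : x1 - x3 * t ^ 2 = 0
      · exfalso
        have h1 : x2 - x3 * t ≠ 0 := by
          intro h1
          refine hvn (mem_span_singleton.2 ⟨x3, ?_⟩)
          ext i; fin_cases i <;> simp [ptv] <;> grind
        refine hT ⟨some t, line_span hl hPl ?_ ?_⟩
        · have : (tanv (some t) : Fin 4 → F) = (1 / (x2 - x3 * t)) • (![x0, x1, x2, x3] - x3 • ptv (some t)) := by
            ext i; fin_cases i <;> simp [tanv, ptv] <;> field_simp <;> grind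
          rw [this]
          exact ℓ.smul_mem _ (ℓ.sub_mem hv (ℓ.smul_mem _ hPl))
        · apply pair_ind
          intro hh
          obtain ⟨a, ha⟩ := mem_span_singleton.1 hh
          have := congrFun ha 2
          have h3 := congrFun ha 3
          simp [ptv, tanv] at this h3
          simp [h3] at this
      · refine ⟨some t, (x2 - x3 * t) / (x1 - x3 * t ^ 2), line_span hl hPl ?_ (pair_ind (dir_notin _ _))⟩
        have : (dirv (some t) ((x2 - x3 * t) / (x1 - x3 * t ^ 2)) : Fin 4 → F) =
            (1 / (x1 - x3 * t ^ 2)) • (![x0, x1, x2, x3] - x3 • ptv (some t)) := by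
            ext i; fin_cases i <;> simp [dirv, ptv] <;> field_simp <;> grind
        rw [this]
        exact ℓ.smul_mem _ (ℓ.sub_mem hv (ℓ.smul_mem _ hPl))
  · rintro ⟨o, m, rfl⟩
    refine ⟨⟨lin_isLine o m, span F {ptv o}, ⟨(mem_cubic _).2 ⟨o, rfl⟩, ?_⟩, ?_⟩, ?_,
      planeOf F (oscv o), (osc_iff _).2 ⟨o, rfl⟩, lin_osc h2 o m⟩
    · rw [span_singleton_le_iff_mem]; exact pt_mem_lin o m
    · rintro P ⟨hP, hPl⟩
      obtain ⟨o', rfl⟩ := (mem_cubic P).1 hP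
      rw [span_singleton_le_iff_mem] at hPl
      rw [lin_pt h2 hPl]
    · rw [tan_iff]
      rintro ⟨o', h⟩
      obtain rfl : o = o' := lin_pt h2 (m := m) (h ▸ subset_span (by simp))
      have : tanv o ∈ Lin o m := h ▸ subset_span (by simp)
      obtain ⟨a, b, hab⟩ := mem_span_pair.1 this
      have h0 := congrFun hab 0
      have h1 := congrFun hab 1
      have h2 := congrFun hab 2
      have h3 := congrFun hab 3
      rcases o with _ | t <;> simp [ptv, dirv, tanv] at h0 h1 h2 h3 <;> grind

lemma orbit_lin [Fintype F] (hF : 8 ≤ Fintype.card F) (h2 : (2 : F) = 0) (m : F) :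
    lineOrbit F (Lin (some 0) m) = {ℓ | ∃ o d, d ≠ 0 ∧ ℓ = Lin o (m * d)} := by
  ext ℓ
  constructor
  · rintro ⟨f, hf, rfl⟩
    obtain ⟨o, c, d, hd, rfl⟩ := (Gq_char hF h2 f).1 hf
    exact ⟨o, d, hd, Gq_lin o c d m hd⟩
  · rintro ⟨o, d, hd, rfl⟩
    exact ⟨_, (Gq_char hF h2 _).2 ⟨o, 0, d, hd, rfl⟩, Gq_lin o 0 d m hd⟩

lemma rep_zero : repM (some (0 : F)) = 1 := by
  ext i j; fin_cases i <;> fin_cases j <;> simp [repM]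

lemma stab_lin [Fintype F] (hF : 8 ≤ Fintype.card F) (h2 : (2 : F) = 0) (m : F) :
    lineStab F (Lin (some 0) m) = {f | ∃ c d, d ≠ 0 ∧ m * d = m ∧ f = pm (borM c d)} := by
  ext f
  constructor
  · rintro ⟨hf, hs⟩
    obtain ⟨o, c, d, hd, rfl⟩ := (Gq_char hF h2 f).1 hf
    rw [Gq_lin o c d m hd] at hs
    obtain ⟨rfl, hm⟩ := lin_inj h2 hs
    refine ⟨c, d, hd, hm, ?_⟩
    funext W
    simp [rep_zero, pm_one]
  · rintro ⟨c, d, hd, hm, rfl⟩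
    refine ⟨bor_mem h2 c d hd, ?_⟩
    rw [bor_lin c d m hd, hm]

lemma bor_inj (h2 : (2 : F) = 0) {c c' d d' : F} (hd : d ≠ 0) (hd' : d' ≠ 0)
    (h : pm (borM c d) = pm (borM c' d')) : c = c' ∧ d = d' := by
  constructor
  · have h1 := congrFun h (span F {ptv none})
    rw [pm_span1, pm_span1] at h1
    have hm : (ptv none ᵥ* borM c d) ∈ span F {ptv none ᵥ* borM c' d'} := h1 ▸ mem_span_singleton_self _
    obtain ⟨a, ha⟩ := mem_span_singleton.1 hm
    have k0 := congrFun ha 0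
    have k1 := congrFun ha 1
    simp [ptv, borM, Matrix.vecMul, dotProduct, Fin.sum_univ_succ] at k0 k1
    simp [k0] at k1
    exact k1.symm
  · have h1 := congrFun h (Lin (some 0) 1)
    rw [bor_lin _ _ _ hd, bor_lin _ _ _ hd'] at h1
    simpa using (lin_inj h2 h1).2

end helpers

theorem stmt_11 (q : ℕ) (F : Type) [Field F] [Fintype F]
    (hcard : Fintype.card F = q) (hq : 8 ≤ q) (hev : Even q) :
    {ℓ : Submodule F (Fin 4 → F) | isUGamma F ℓ} = lineOrbit F (Submodule.span F ({![0, 0, 0, 1], ![0, 1, 0, 0]} : Set (Fin 4 → F))) ∪ lineOrbit F (Submodule.span F ({![0, 0, 0, 1], ![0, 1, 1, 0]} : Set (Fin 4 → F))) ∧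
    lineOrbit F (Submodule.span F ({![0, 0, 0, 1], ![0, 1, 0, 0]} : Set (Fin 4 → F))) ≠ lineOrbit F (Submodule.span F ({![0, 0, 0, 1], ![0, 1, 1, 0]} : Set (Fin 4 → F))) ∧
    (lineOrbit F (Submodule.span F ({![0, 0, 0, 1], ![0, 1, 0, 0]} : Set (Fin 4 → F)))).ncard = q + 1 ∧
    (lineOrbit F (Submodule.span F ({![0, 0, 0, 1], ![0, 1, 1, 0]} : Set (Fin 4 → F)))).ncard = q ^ 2 - 1 ∧
    (lineStab F (Submodule.span F ({![0, 0, 0, 1], ![0, 1, 0, 0]} : Set (Fin 4 → F)))).ncard = q * (q - 1) ∧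
    lineStab F (Submodule.span F ({![0, 0, 0, 1], ![0, 1, 0, 0]} : Set (Fin 4 → F))) =
      {f | ∃ c d : F, d ≠ 0 ∧ ∃ A : GL (Fin 4) F,
        (↑A : Matrix (Fin 4) (Fin 4) F) =
          !![1, c, c ^ 2, c ^ 3;
             0, d, 0, c ^ 2 * d;
             0, 0, d ^ 2, c * d ^ 2;
             0, 0, 0, d ^ 3] ∧
        f = projAct F A} ∧
    (lineStab F (Submodule.span F ({![0, 0, 0, 1], ![0, 1, 1, 0]} : Set (Fin 4 → F)))).ncard = q ∧
    lineStab F (Submodule.span F ({![0, 0, 0, 1], ![0, 1, 1, 0]} : Set (Fin 4 → F))) =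
      {f | ∃ c : F, ∃ A : GL (Fin 4) F,
        (↑A : Matrix (Fin 4) (Fin 4) F) =
          !![1, c, c ^ 2, c ^ 3;
             0, 1, 0, c ^ 2;
             0, 0, 1, c;
             0, 0, 0, 1] ∧
        f = projAct F A} := by
  classical
  have hF : 8 ≤ Fintype.card F := hcard ▸ hq
  have h2 : (2 : F) = 0 := by
    have h1 : ringChar F = 2 := by
      rw [FiniteField.even_card_iff_char_two, hcard]
      exact Nat.even_iff.1 hev
    have := ringChar.spec F 2
    rw [h1] at this
    exact_mod_cast this.2 dvd_rfl
  have e1 : Submodule.span F ({![0, 0, 0, 1], ![0, 1, 0, 0]} : Set (Fin 4 → F)) = Lin (some 0) 0 := by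
    simp [Lin, ptv, dirv]
  have e2 : Submodule.span F ({![0, 0, 0, 1], ![0, 1, 1, 0]} : Set (Fin 4 → F)) = Lin (some 0) 1 := by
    simp [Lin, ptv, dirv]
  rw [e1, e2]
  have o1 := orbit_lin hF h2 (0 : F)
  have o2 := orbit_lin hF h2 (1 : F)
  have s1 := stab_lin hF h2 (0 : F)
  have s2 := stab_lin hF h2 (1 : F)
  simp only [zero_mul, one_mul] at o1 o2 s1 s2
  have hnz : Nat.card {d : F // d ≠ 0} = q - 1 := by
    rw [Nat.card_eq_fintype_card, Fintype.card_subtype_compl, Fintype.card_subtype_eq, hcard]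
  have hLinj : Function.Injective (fun p : Option F × F => Lin p.1 p.2) := by
    rintro ⟨a, b⟩ ⟨c, d⟩ h
    obtain ⟨rfl, rfl⟩ := lin_inj h2 h
    rfl
  refine ⟨?_, ?_, ?_, ?_, ?_, ?_, ?_, ?_⟩
  · ext ℓ
    rw [Set.mem_setOf_eq, ugamma_iff h2, o1, o2]
    constructor
    · rintro ⟨o, m, rfl⟩
      by_cases hm : m = 0
      · subst hm
        exact Or.inl ⟨o, 1, one_ne_zero, rfl⟩
      · exact Or.inr ⟨o, m, hm, rfl⟩
    · rintro (⟨o, d, hd, rfl⟩ | ⟨o, d, hd, rfl⟩)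
      · exact ⟨_, _, rfl⟩
      · exact ⟨_, _, rfl⟩
  · intro h
    rw [o1, o2] at h
    have : Lin (some 0) (0 : F) ∈ {ℓ | ∃ (o : Option F) (d : F), d ≠ 0 ∧ ℓ = Lin o (0 : F)} := ⟨some 0, 1, one_ne_zero, rfl⟩
    rw [h] at this
    obtain ⟨o, d, hd, hh⟩ := this
    exact hd (lin_inj h2 hh).2.symm
  · have : {ℓ | ∃ (o : Option F) (d : F), d ≠ 0 ∧ ℓ = Lin o (0 : F)} = Set.range (fun o : Option F => Lin o 0) := by
      ext ℓ
      constructor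
      · rintro ⟨o, d, hd, rfl⟩; exact ⟨o, rfl⟩
      · rintro ⟨o, rfl⟩; exact ⟨o, 1, one_ne_zero, rfl⟩
    rw [o1, this, Set.ncard_range_of_injective (fun a b h => (lin_inj h2 h).1),
      Nat.card_eq_fintype_card, Fintype.card_option, hcard]
  · have : {ℓ | ∃ o d, d ≠ 0 ∧ ℓ = Lin o (d : F)} =
        Set.range (fun p : Option F × {d : F // d ≠ 0} => Lin p.1 p.2.1) := by
      ext ℓ
      constructor
      · rintro ⟨o, d, hd, rfl⟩; exact ⟨(o, ⟨d, hd⟩), rfl⟩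
      · rintro ⟨⟨o, d, hd⟩, rfl⟩; exact ⟨o, d, hd, rfl⟩
    rw [o2, this, Set.ncard_range_of_injective, Nat.card_prod, hnz, Nat.card_eq_fintype_card,
      Fintype.card_option, hcard]
    · exact (Nat.sq_sub_sq q 1).symm
    · rintro ⟨a, b, hb⟩ ⟨c, d, hd⟩ h
      obtain ⟨rfl, h'⟩ := lin_inj h2 h
      simp only at h'
      subst h'
      rfl
  · have : {f | ∃ c d, d ≠ 0 ∧ True ∧ f = pm (borM c d)} =
        Set.range (fun p : F × {d : F // d ≠ 0} => pm (borM p.1 p.2.1)) := by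
      ext ℓ
      constructor
      · rintro ⟨o, d, hd, -, rfl⟩; exact ⟨(o, ⟨d, hd⟩), rfl⟩
      · rintro ⟨⟨o, d, hd⟩, rfl⟩; exact ⟨o, d, hd, trivial, rfl⟩
    rw [s1, this, Set.ncard_range_of_injective, Nat.card_prod, hnz, Nat.card_eq_fintype_card, hcard]
    rintro ⟨a, b, hb⟩ ⟨c, d, hd⟩ h
    obtain ⟨h'', h'⟩ := bor_inj h2 hb hd h
    dsimp only at h'' h'
    subst h''
    subst h'
    rfl
  · rw [s1]
    ext f
    constructor
    · rintro ⟨c, d, hd, -, rfl⟩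
      obtain ⟨A, hA⟩ := gl_bor c d hd
      exact ⟨c, d, hd, A, hA, by rw [projAct_eq, hA]⟩
    · rintro ⟨c, d, hd, A, hA, rfl⟩
      exact ⟨c, d, hd, trivial, by rw [projAct_eq, hA]; rfl⟩
  · have : {f | ∃ c d, d ≠ 0 ∧ d = (1 : F) ∧ f = pm (borM c d)} =
        Set.range (fun p : F => pm (borM p 1)) := by
      ext ℓ
      constructor
      · rintro ⟨o, d, hd, rfl, rfl⟩; exact ⟨o, rfl⟩
      · rintro ⟨o, rfl⟩; exact ⟨o, 1, one_ne_zero, rfl, rfl⟩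
    rw [s2, this, Set.ncard_range_of_injective, Nat.card_eq_fintype_card, hcard]
    intro a b h
    exact (bor_inj h2 one_ne_zero one_ne_zero h).1
  · rw [s2]
    have hb : ∀ c : F, borM c 1 = !![1, c, c ^ 2, c ^ 3; 0, 1, 0, c ^ 2; 0, 0, 1, c; 0, 0, 0, 1] := by
      intro c
      simp [borM]
    ext f
    constructor
    · rintro ⟨c, d, hd, rfl, rfl⟩
      obtain ⟨A, hA⟩ := gl_bor c 1 hd
      exact ⟨c, A, hA.trans (hb c), by rw [projAct_eq, hA]⟩
    · rintro ⟨c, A, hA, rfl⟩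
      exact ⟨c, 1, one_ne_zero, rfl, by rw [projAct_eq, hA, hb]⟩
end

section
/- For any prime power q ≥ 5, the line ℓ1 through (0:0:0:1) and (1:0:1:0) is a UnΓ-line of the twisted cubic C, i.e. it meets C exactly in P(0) = (0:0:0:1), is not a tangent, and lies in no osculating plane. Moreover, if q is odd and ρ ∈ F_q is a non-square, the line ℓ2 through (0:0:0:1) and (1:0:ρ:0) is also a UnΓ-line. -/
open Matrix Submodule

theorem aux_line (F : Type) [Field F] (ρ : F) (hρ : ρ ≠ 0) :
    (∀ P ∈ twistedCubic F, (P ≤ (Submodule.span F ({![0, 0, 0, 1], ![1, 0, ρ, 0]} : Set (Fin 4 → F))) ↔ P = Submodule.span F ({![0, 0, 0, 1]} : Set (Fin 4 → F)))) ∧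
      ¬ isTangent F (Submodule.span F ({![0, 0, 0, 1], ![1, 0, ρ, 0]} : Set (Fin 4 → F))) ∧
      (∀ π : Submodule F (Fin 4 → F), isOscPlane F π → ¬ (Submodule.span F ({![0, 0, 0, 1], ![1, 0, ρ, 0]} : Set (Fin 4 → F))) ≤ π) := by
  have h1 : (![0, 0, 0, 1] : Fin 4 → F) ∈ Submodule.span F ({![0, 0, 0, 1], ![1, 0, ρ, 0]} : Set (Fin 4 → F)) :=
    Submodule.subset_span (by simp)
  have h2 : (![1, 0, ρ, 0] : Fin 4 → F) ∈ Submodule.span F ({![0, 0, 0, 1], ![1, 0, ρ, 0]} : Set (Fin 4 → F)) :=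
    Submodule.subset_span (by simp)
  refine ⟨?_, ?_, ?_⟩
  · rintro P ⟨v, hv, rfl⟩
    constructor
    · intro h
      have hm := h (Submodule.mem_span_singleton_self v)
      rw [Submodule.mem_span_pair] at hm
      obtain ⟨a, b, hab⟩ := hm
      have e0 := congrFun hab 0
      have e1 := congrFun hab 1
      have e2 := congrFun hab 2
      rcases hv with ⟨t, rfl⟩ | rfl
      · simp at e0 e1 e2
        have ht : t = 0 := by
          by_contra hne
          exact hne (by simpa using e1.symm)
        subst ht
        simp
      · simp at e0 e1 e2
        subst e0
        simp [hρ] at e2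
    · intro h
      simp only at h ⊢
      rw [h, Submodule.span_singleton_le_iff_mem]
      exact h1
  · rintro (⟨t, h⟩ | h)
    · rw [h, tangentAt, Submodule.mem_span_pair] at h1 h2
      obtain ⟨a, b, hab⟩ := h1
      obtain ⟨c, d, hcd⟩ := h2
      have e1 := congrFun hab 1
      have e2 := congrFun hab 2
      have e3 := congrFun hab 3
      have f0 := congrFun hcd 0
      simp at e1 e2 e3 f0
      subst e3
      have ht : t = 0 := by
        have : t ^ 2 = 0 := by linear_combination 2 * t * e2 - e1
        simpa using this
      subst ht
      simp at f0
    · rw [h, tangentAtInf, Submodule.mem_span_pair] at h1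
      obtain ⟨a, b, hab⟩ := h1
      have e3 := congrFun hab 3
      simp at e3
  · rintro π (⟨t, rfl⟩ | rfl) h
    · have g1 := h h1
      have g2 := h h2
      simp [oscPlane, planeOf, planeForm] at g1 g2
      subst g1
      simp at g2
    · have g1 := h h1
      simp [oscPlaneInf, planeOf, planeForm] at g1

theorem stmt_12 (q : ℕ) (F : Type) [Field F] [Fintype F]
    (hcard : Fintype.card F = q) (hq : 5 ≤ q) :
    ((∀ P ∈ twistedCubic F, (P ≤ (Submodule.span F ({![0, 0, 0, 1], ![1, 0, 1, 0]} : Set (Fin 4 → F))) ↔ P = Submodule.span F ({![0, 0, 0, 1]} : Set (Fin 4 → F)))) ∧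
      ¬ isTangent F (Submodule.span F ({![0, 0, 0, 1], ![1, 0, 1, 0]} : Set (Fin 4 → F))) ∧
      (∀ π : Submodule F (Fin 4 → F), isOscPlane F π → ¬ (Submodule.span F ({![0, 0, 0, 1], ![1, 0, 1, 0]} : Set (Fin 4 → F))) ≤ π)) ∧
    ∀ ρ : F, Odd q → (¬ ∃ s : F, s ^ 2 = ρ) →
      (∀ P ∈ twistedCubic F, (P ≤ (Submodule.span F ({![0, 0, 0, 1], ![1, 0, ρ, 0]} : Set (Fin 4 → F))) ↔ P = Submodule.span F ({![0, 0, 0, 1]} : Set (Fin 4 → F)))) ∧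
      ¬ isTangent F (Submodule.span F ({![0, 0, 0, 1], ![1, 0, ρ, 0]} : Set (Fin 4 → F))) ∧
      (∀ π : Submodule F (Fin 4 → F), isOscPlane F π → ¬ (Submodule.span F ({![0, 0, 0, 1], ![1, 0, ρ, 0]} : Set (Fin 4 → F))) ≤ π) := by
  refine ⟨aux_line F 1 one_ne_zero, fun ρ _ hns => aux_line F ρ ?_⟩
  rintro rfl
  exact hns ⟨0, by simp⟩
end

section
/- Let q ≥ 5 be an odd prime power and let ρ ∈ F_q be a non-square. The UnΓ-lines of the twisted cubic C form exactly two orbits under G_q, each of size (q³ − q)/2, namely the orbit of the line ℓ1 through (0:0:0:1) and (1:0:1:0) and the orbit of the line ℓ2 through (0:0:0:1) and (1:0:ρ:0). Moreover, ℓ1 and ℓ2 have the same stabilizer in G_q, of order 2, consisting exactly of the projectivities induced by the diagonal matrices diag(1, d, d², d³) with d ∈ {1, −1}. -/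
open Matrix Submodule

section
variable {F : Type} [Field F]

lemma pa_span (A : GL (Fin 4) F) (s : Set (Fin 4 → F)) :
    projAct F A (span F s) = span F ((fun v => v ᵥ* (A : Matrix (Fin 4) (Fin 4) F)) '' s) := by
  unfold projAct
  rw [Submodule.map_span]
  rfl

lemma pa_span1 (A : GL (Fin 4) F) (v : Fin 4 → F) :
    projAct F A (span F {v}) = span F {v ᵥ* (A : Matrix (Fin 4) (Fin 4) F)} := by
  rw [pa_span, Set.image_singleton]

lemma pa_span2 (A : GL (Fin 4) F) (v w : Fin 4 → F) :
    projAct F A (span F {v, w}) = span F {v ᵥ* (A : Matrix (Fin 4) (Fin 4) F),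
      w ᵥ* (A : Matrix (Fin 4) (Fin 4) F)} := by
  rw [pa_span, Set.image_pair]

lemma pa_mul (A B : GL (Fin 4) F) (W : Submodule F (Fin 4 → F)) :
    projAct F (A * B) W = projAct F B (projAct F A W) := by
  unfold projAct
  rw [← Submodule.map_comp]
  congr 1
  refine LinearMap.ext fun v => ?_
  simp [Matrix.vecMul_vecMul]

lemma pa_one (W : Submodule F (Fin 4 → F)) : projAct F (1 : GL (Fin 4) F) W = W := by
  unfold projAct
  convert Submodule.map_id W
  ext v i
  simp

lemma pa_inv (A : GL (Fin 4) F) (W : Submodule F (Fin 4 → F)) :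
    projAct F A⁻¹ (projAct F A W) = W := by
  rw [← pa_mul, mul_inv_cancel, pa_one]

lemma pa_inv' (A : GL (Fin 4) F) (W : Submodule F (Fin 4 → F)) :
    projAct F A (projAct F A⁻¹ W) = W := by
  rw [← pa_mul, inv_mul_cancel, pa_one]

lemma pa_inj (A : GL (Fin 4) F) : Function.Injective (projAct F A) :=
  Function.LeftInverse.injective (pa_inv A)

lemma pa_mono (A : GL (Fin 4) F) {V W : Submodule F (Fin 4 → F)} (h : V ≤ W) :
    projAct F A V ≤ projAct F A W := Submodule.map_mono h

lemma pa_le (A : GL (Fin 4) F) {V W : Submodule F (Fin 4 → F)} :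
    projAct F A V ≤ projAct F A W ↔ V ≤ W :=
  ⟨fun h => by simpa [pa_inv] using pa_mono A⁻¹ h, pa_mono A⟩

lemma pa_smul (A B : GL (Fin 4) F) (a : F) (ha : a ≠ 0)
    (h : (A : Matrix (Fin 4) (Fin 4) F) = a • (B : Matrix (Fin 4) (Fin 4) F)) :
    projAct F A = projAct F B := by
  funext W
  unfold projAct
  rw [← Submodule.map_smul (Matrix.vecMulLinear (B : Matrix (Fin 4) (Fin 4) F)) W a ha]
  congr 1
  ext v i
  simp [h, Matrix.vecMul_smul]

lemma pa_finrank (A : GL (Fin 4) F) (W : Submodule F (Fin 4 → F)) :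
    Module.finrank F (projAct F A W) = Module.finrank F W := by
  have h1 : ∀ (A : GL (Fin 4) F) (W : Submodule F (Fin 4 → F)),
      Module.finrank F (projAct F A W) ≤ Module.finrank F W := fun A W =>
    Submodule.finrank_map_le _ _
  refine le_antisymm (h1 A W) ?_
  have := h1 A⁻¹ (projAct F A W)
  rwa [pa_inv] at this

lemma span_smul_eq (v w : Fin 4 → F) (k : F) (hk : k ≠ 0) (h : v = k • w) :
    span F {v} = span F {w} := by
  rw [h]; exact Submodule.span_singleton_smul_eq (isUnit_iff_ne_zero.mpr hk) w

lemma C_P (t : F) : span F {![t ^ 3, t ^ 2, t, 1]} ∈ twistedCubic F :=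
  ⟨_, Or.inl ⟨t, rfl⟩, rfl⟩
lemma C_inf : span F {![(1:F), 0, 0, 0]} ∈ twistedCubic F :=
  ⟨_, Or.inr rfl, rfl⟩
lemma C_zero : span F {![(0:F), 0, 0, 1]} ∈ twistedCubic F := by
  simpa using C_P (0:F)

/-- points (1,s,s²,s³) -/
lemma C_Q (s : F) : span F {![1, s, s ^ 2, s ^ 3]} ∈ twistedCubic F := by
  by_cases hs : s = 0
  · subst hs; simpa using C_inf (F := F)
  · rw [span_smul_eq _ ![s⁻¹ ^ 3, s⁻¹ ^ 2, s⁻¹, 1] (s ^ 3) (pow_ne_zero _ hs)]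
    · exact C_P _
    · ext i; fin_cases i <;> simp <;> field_simp

lemma C_cases {P : Submodule F (Fin 4 → F)} (h : P ∈ twistedCubic F) :
    (∃ t : F, P = span F {![t ^ 3, t ^ 2, t, 1]}) ∨ P = span F {![1, 0, 0, 0]} := by
  obtain ⟨v, ⟨t, rfl⟩ | rfl, rfl⟩ := h
  · exact Or.inl ⟨t, rfl⟩
  · exact Or.inr rfl

lemma C_cases' {P : Submodule F (Fin 4 → F)} (h : P ∈ twistedCubic F) :
    (∃ s : F, P = span F {![1, s, s ^ 2, s ^ 3]}) ∨ P = span F {![0, 0, 0, 1]} := by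
  rcases C_cases h with ⟨t, rfl⟩ | rfl
  · by_cases ht : t = 0
    · right; subst ht; simp
    · left; refine ⟨t⁻¹, span_smul_eq _ _ (t ^ 3) (pow_ne_zero _ ht) ?_⟩
      ext i; fin_cases i <;> simp <;> field_simp
  · left; exact ⟨0, by simp⟩

lemma C_eqs {v : Fin 4 → F} (h : span F {v} ∈ twistedCubic F) :
    v 0 * v 2 = v 1 ^ 2 ∧ v 1 * v 3 = v 2 ^ 2 := by
  have hv : v ∈ span F {v} := Submodule.mem_span_singleton_self v
  rcases C_cases h with ⟨t, ht⟩ | ht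
  all_goals
    rw [ht] at hv
    obtain ⟨k, rfl⟩ := Submodule.mem_span_singleton.mp hv
    simp
  constructor <;> ring

def InG (A : GL (Fin 4) F) : Prop := projAct F A '' twistedCubic F = twistedCubic F

lemma InG.maps {A : GL (Fin 4) F} (h : InG A) {P} (hP : P ∈ twistedCubic F) :
    projAct F A P ∈ twistedCubic F := by
  rw [← h]; exact ⟨P, hP, rfl⟩

lemma InG.inv {A : GL (Fin 4) F} (h : InG A) : InG A⁻¹ := by
  unfold InG
  conv_lhs => rw [← h]
  rw [Set.image_image]; simp [pa_inv]

lemma InG.mul {A B : GL (Fin 4) F} (h : InG A) (h' : InG B) : InG (A * B) := by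
  unfold InG
  have : projAct F (A * B) = projAct F B ∘ projAct F A := by
    funext W; exact pa_mul A B W
  rw [this, Set.image_comp, h, h']

lemma InG.mk {A B : GL (Fin 4) F} (hAB : A * B = 1)
    (h : ∀ P ∈ twistedCubic F, projAct F A P ∈ twistedCubic F)
    (h' : ∀ P ∈ twistedCubic F, projAct F B P ∈ twistedCubic F) : InG A := by
  have : B = A⁻¹ := (inv_eq_of_mul_eq_one_right hAB).symm
  subst this
  apply Set.Subset.antisymm
  · rintro _ ⟨P, hP, rfl⟩; exact h P hP
  · intro P hP; exact ⟨_, h' P hP, pa_inv' A P⟩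

def matN (x : F) : Matrix (Fin 4) (Fin 4) F :=
  !![1, 0, 0, 0; 3 * x, 1, 0, 0; 3 * x ^ 2, 2 * x, 1, 0; x ^ 3, x ^ 2, x, 1]
def matW (F : Type) [Field F] : Matrix (Fin 4) (Fin 4) F :=
  !![0, 0, 0, 1; 0, 0, 1, 0; 0, 1, 0, 0; 1, 0, 0, 0]
def matD (d : F) : Matrix (Fin 4) (Fin 4) F :=
  !![1, 0, 0, 0; 0, d, 0, 0; 0, 0, d ^ 2, 0; 0, 0, 0, d ^ 3]

lemma matN_mul (x : F) : matN x * matN (-x) = 1 := by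
  unfold matN
  ext i j
  fin_cases i <;> fin_cases j <;> simp [Matrix.mul_apply, Fin.sum_univ_four] <;> ring
lemma matW_mul : matW F * matW F = 1 := by
  unfold matW
  ext i j
  fin_cases i <;> fin_cases j <;> simp [Matrix.mul_apply, Fin.sum_univ_four]
lemma matD_mul (d : F) (hd : d ≠ 0) : matD d * matD d⁻¹ = 1 := by
  unfold matD
  ext i j
  fin_cases i <;> fin_cases j <;> simp [Matrix.mul_apply, Fin.sum_univ_four] <;> field_simp

def gN (x : F) : GL (Fin 4) F := ⟨matN x, matN (-x), matN_mul x, by simpa using matN_mul (-x)⟩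
def gW (F : Type) [Field F] : GL (Fin 4) F := ⟨matW F, matW F, matW_mul, matW_mul⟩
def gD (d : F) (hd : d ≠ 0) : GL (Fin 4) F :=
  ⟨matD d, matD d⁻¹, matD_mul d hd, by simpa using matD_mul d⁻¹ (inv_ne_zero hd)⟩

lemma vecN (x a b c d : F) : ![a, b, c, d] ᵥ* (gN x : Matrix (Fin 4) (Fin 4) F) =
    ![a + 3 * x * b + 3 * x ^ 2 * c + x ^ 3 * d, b + 2 * x * c + x ^ 2 * d, c + x * d, d] := by
  ext i
  fin_cases i <;> simp [gN, matN, Matrix.vecMul, dotProduct, Fin.sum_univ_four] <;> ring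
lemma vecW (a b c d : F) : ![a, b, c, d] ᵥ* (gW F : Matrix (Fin 4) (Fin 4) F) =
    ![d, c, b, a] := by
  ext i
  fin_cases i <;> simp [gW, matW, Matrix.vecMul, dotProduct, Fin.sum_univ_four]
lemma vecD (e : F) (he : e ≠ 0) (a b c d : F) :
    ![a, b, c, d] ᵥ* (gD e he : Matrix (Fin 4) (Fin 4) F) =
    ![a, e * b, e ^ 2 * c, e ^ 3 * d] := by
  ext i
  fin_cases i <;> simp [gD, matD, Matrix.vecMul, dotProduct, Fin.sum_univ_four] <;> ring

lemma gN_inv (x : F) : (gN x)⁻¹ = gN (-x) :=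
  inv_eq_of_mul_eq_one_right (Units.ext (matN_mul x))
lemma gW_inv : (gW F)⁻¹ = gW F :=
  inv_eq_of_mul_eq_one_right (Units.ext (matW_mul))
lemma gN_zero : gN (0:F) = 1 := by
  apply Units.ext
  change matN 0 = 1
  ext i j
  fin_cases i <;> fin_cases j <;> simp [matN]

lemma InG_N (x : F) : InG (gN x) := by
  have h : ∀ x : F, ∀ P ∈ twistedCubic F, projAct F (gN x) P ∈ twistedCubic F := by
    intro x P hP
    rcases C_cases hP with ⟨t, rfl⟩ | rfl
    · rw [pa_span1, vecN]
      convert C_P (t + x) using 4 <;> ring_nf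
    · rw [pa_span1, vecN]
      simpa using C_inf (F := F)
  exact InG.mk (B := gN (-x)) (Units.ext (matN_mul x)) (h x) (h (-x))

lemma InG_W : InG (gW F) := by
  have h : ∀ P ∈ twistedCubic F, projAct F (gW F) P ∈ twistedCubic F := by
    intro P hP
    rcases C_cases hP with ⟨t, rfl⟩ | rfl
    · rw [pa_span1, vecW]; exact C_Q t
    · rw [pa_span1, vecW]; exact C_zero
  exact InG.mk (B := gW F) (Units.ext matW_mul) h h

lemma InG_D (e : F) (he : e ≠ 0) : InG (gD e he) := by
  have h : ∀ (e : F) (he : e ≠ 0), ∀ P ∈ twistedCubic F, projAct F (gD e he) P ∈ twistedCubic F := by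
    intro e he P hP
    rcases C_cases' hP with ⟨t, rfl⟩ | rfl
    · rw [pa_span1, vecD]
      convert C_Q (e * t) using 4 <;> ring_nf
    · rw [pa_span1, vecD, span_smul_eq _ ![0, 0, 0, 1] (e ^ 3) (pow_ne_zero _ he)]
      · exact C_zero
      · simp
  exact InG.mk (B := gD e⁻¹ (inv_ne_zero he)) (Units.ext (matD_mul e he)) (h e he) (h _ _)

/-- `N' c`, fixing `P(0)`. -/
def gM (c : F) : GL (Fin 4) F := gW F * gN c * gW F

lemma vecM (x a b c d : F) : ![a, b, c, d] ᵥ* (gM x : Matrix (Fin 4) (Fin 4) F) =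
    ![a, b + x * a, c + 2 * x * b + x ^ 2 * a, d + 3 * x * c + 3 * x ^ 2 * b + x ^ 3 * a] := by
  have : (gM x : Matrix (Fin 4) (Fin 4) F) = (gW F : Matrix (Fin 4) (Fin 4) F) * gN x * gW F := rfl
  rw [this, ← Matrix.vecMul_vecMul, ← Matrix.vecMul_vecMul, vecW, vecN, vecW]

lemma InG_M (c : F) : InG (gM c) := (InG_W.mul (InG_N c)).mul InG_W

def gT : Option F → GL (Fin 4) F
  | none => gW F
  | some x => gN x

lemma InG_T (x : Option F) : InG (gT x) := by
  cases x
  · exact InG_W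
  · exact InG_N _

/-! ### classification -/

lemma cubic_zero_s15 [Fintype F] (hq : 5 ≤ Fintype.card F) (a b c d : F)
    (h : ∀ t : F, t ≠ 0 → a * t ^ 3 + b * t ^ 2 + c * t + d = 0) :
    a = 0 ∧ b = 0 ∧ c = 0 ∧ d = 0 := by
  classical
  open Polynomial in
  let p : F[X] := C a * X ^ 3 + C b * X ^ 2 + C c * X + C d
  have hp : p = 0 := by
    apply Polynomial.eq_zero_of_natDegree_lt_card_of_eval_eq_zero' p (Finset.univ.erase 0)
    · intro t ht
      have := h t (Finset.ne_of_mem_erase ht)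
      simpa [p] using this
    · rw [Finset.card_erase_of_mem (Finset.mem_univ _), Finset.card_univ]
      have : p.natDegree ≤ 3 := Polynomial.natDegree_cubic_le
      omega
  have e : ∀ n, p.coeff n = 0 := by simp [hp]
  have e0 := e 0
  have e1 := e 1
  have e2 := e 2
  have e3 := e 3
  simp [p, Polynomial.coeff_X, Polynomial.coeff_C] at e0 e1 e2 e3
  exact ⟨e3, e2, e1, e0⟩

lemma diag_class [Fintype F] (hq : 5 ≤ Fintype.card F) (A : GL (Fin 4) F) (hA : InG A)
    (h0 : projAct F A (span F {![0, 0, 0, 1]}) = span F {![0, 0, 0, 1]})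
    (hi : projAct F A (span F {![1, 0, 0, 0]}) = span F {![1, 0, 0, 0]}) :
    ∃ (e : F) (he : e ≠ 0), projAct F A = projAct F (gD e he) := by
  obtain ⟨M, hM⟩ : ∃ M : Matrix (Fin 4) (Fin 4) F, M = A := ⟨_, rfl⟩
  have hdet : M.det ≠ 0 := by
    rw [hM]; exact (Matrix.isUnits_det_units A).ne_zero
  have key : ∀ v : Fin 4 → F, v ᵥ* M = fun j => v 0 * M 0 j + v 1 * M 1 j + v 2 * M 2 j + v 3 * M 3 j := by
    intro v; ext j; simp [Matrix.vecMul, dotProduct, Fin.sum_univ_four]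
  rw [pa_span1, ← hM, key] at h0 hi
  obtain ⟨d, hd⟩ := Submodule.mem_span_singleton.mp (h0 ▸ Submodule.mem_span_singleton_self _)
  obtain ⟨a, ha⟩ := Submodule.mem_span_singleton.mp (hi ▸ Submodule.mem_span_singleton_self _)
  have d0 := congrFun hd 0
  have d1 := congrFun hd 1
  have d2 := congrFun hd 2
  have d3 := congrFun hd 3
  have a0 := congrFun ha 0
  have a1 := congrFun ha 1
  have a2 := congrFun ha 2
  have a3 := congrFun ha 3
  simp at d0 d1 d2 d3 a0 a1 a2 a3
  have ha' : a ≠ 0 := by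
    rintro rfl
    exact hdet (Matrix.det_eq_zero_of_row_eq_zero 0 (fun j => by fin_cases j <;> simp [← a0, ← a1, ← a2, ← a3]))
  have hd' : d ≠ 0 := by
    rintro rfl
    exact hdet (Matrix.det_eq_zero_of_row_eq_zero 3 (fun j => by fin_cases j <;> simp [← d0, ← d1, ← d2, ← d3]))
  have E : ∀ t : F, t ≠ 0 → _ := fun t _ => C_eqs (by
    have := hA.maps (C_P t)
    rwa [pa_span1, ← hM, key] at this)
  simp [← a0, ← a1, ← a2, ← a3, ← d0, ← d1, ← d2, ← d3] at E
  have E1 := cubic_zero_s15 hq (a * M 1 2) (a * M 2 2 + M 1 0 * M 1 2 - M 1 1 ^ 2)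
    (M 1 0 * M 2 2 + M 2 0 * M 1 2 - 2 * M 1 1 * M 2 1) (M 2 0 * M 2 2 - M 2 1 ^ 2) (by
      intro t ht
      have := (E t ht).1
      apply mul_left_cancel₀ (pow_ne_zero 2 ht)
      linear_combination this)
  have E2 := cubic_zero_s15 hq (M 1 1 * M 1 3 - M 1 2 ^ 2) (M 1 1 * M 2 3 + M 2 1 * M 1 3 - 2 * M 1 2 * M 2 2)
    (M 1 1 * d + M 2 1 * M 2 3 - M 2 2 ^ 2) (M 2 1 * d) (by
      intro t ht
      have := (E t ht).2
      apply mul_left_cancel₀ ht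
      linear_combination this)
  obtain ⟨x1, x2, x3, x4⟩ := E1
  obtain ⟨y1, y2, y3, y4⟩ := E2
  have b2 : M 1 2 = 0 := by simpa [ha'] using x1
  have c1 : M 2 1 = 0 := by simpa [hd'] using y4
  simp only [b2, c1] at x2 x3 x4 y1 y2 y3
  have b1 : M 1 1 ≠ 0 := by
    intro h
    exact hdet (Matrix.det_eq_zero_of_column_eq_zero 1 (fun j => by fin_cases j <;> simp [← a1, ← d1, h, c1]))
  have c2 : M 2 2 ≠ 0 := by
    intro h
    exact hdet (Matrix.det_eq_zero_of_column_eq_zero 2 (fun j => by fin_cases j <;> simp [← a2, ← d2, h, b2]))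
  simp [b1, c2] at x3 x4 y1 y2
  simp at x2 y3
  have f2 : M 2 2 = a * (M 1 1 / a) ^ 2 := by field_simp; linear_combination x2
  have f3 : d = a * (M 1 1 / a) ^ 3 := by
    field_simp
    apply mul_left_cancel₀ b1
    linear_combination a ^ 2 * y3 + (a * M 2 2 + M 1 1 ^ 2) * x2
  refine ⟨M 1 1 / a, div_ne_zero b1 ha', pa_smul _ _ a ha' ?_⟩
  rw [← hM]
  change M = a • matD _
  ext i j
  fin_cases i <;> fin_cases j <;> simp only [matD, Matrix.smul_apply, smul_eq_mul] <;>
    simp [← a0, ← a1, ← a2, ← a3, ← d0, ← d1, ← d2, ← d3, b2, c1, x3, x4, y1, y2]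
  · field_simp
  · exact f2
  · exact f3

lemma fix_class [Fintype F] (hq : 5 ≤ Fintype.card F) (A : GL (Fin 4) F) (hA : InG A)
    (h0 : projAct F A (span F {![0, 0, 0, 1]}) = span F {![0, 0, 0, 1]}) :
    ∃ (c e : F) (he : e ≠ 0), ∀ W, projAct F A W = projAct F (gM c) (projAct F (gD e he) W) := by
  have hM0 : ∀ c : F, projAct F (gM c) (span F {![0, 0, 0, 1]}) = span F {![0, 0, 0, 1]} := by
    intro c; rw [pa_span1, vecM]; simp
  rcases C_cases' (hA.maps C_inf) with ⟨c, hc⟩ | hc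
  · have hMi : projAct F (gM c) (span F {![1, 0, 0, 0]}) = span F {![1, c, c ^ 2, c ^ 3]} := by
      rw [pa_span1, vecM]; simp
    obtain ⟨e, he, h⟩ := diag_class hq (A * (gM c)⁻¹) (hA.mul (InG_M c).inv)
      (by rw [pa_mul, h0]; conv_lhs => rw [← hM0 c]
          rw [pa_inv])
      (by rw [pa_mul, hc, ← hMi, pa_inv])
    refine ⟨c, e, he, fun W => ?_⟩
    rw [← h, pa_mul, pa_inv']
  · exfalso
    have := pa_inj A (hc.trans h0.symm)
    obtain ⟨k, hk⟩ := Submodule.mem_span_singleton.mp (this ▸ Submodule.mem_span_singleton_self (![1, 0, 0, 0] : Fin 4 → F))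
    have := congrFun hk 0
    simp at this

lemma T_zero (P : Submodule F (Fin 4 → F)) (hP : P ∈ twistedCubic F) :
    ∃ x, projAct F (gT x) (span F {![0, 0, 0, 1]}) = P := by
  rcases C_cases hP with ⟨t, rfl⟩ | rfl
  · refine ⟨some t, ?_⟩
    rw [pa_span1, gT, vecN]; simp
  · refine ⟨none, ?_⟩
    rw [pa_span1, gT, vecW]

lemma T_inj {x y : Option F} (h : projAct F (gT x) (span F {![0, 0, 0, 1]}) =
    projAct F (gT y) (span F {![0, 0, 0, 1]})) : x = y := by
  rw [pa_span1, pa_span1] at h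
  obtain ⟨k, hk⟩ := Submodule.mem_span_singleton.mp (h ▸ Submodule.mem_span_singleton_self _)
  cases x <;> cases y <;> simp only [gT, vecN, vecW] at hk
  · rfl
  · have := congrFun hk 3
    have h0 := congrFun hk 0
    simp at this h0
    simp [this] at h0
  · have := congrFun hk 3
    simp at this
  · have := congrFun hk 3
    have h0 := congrFun hk 2
    simp at this h0
    simp [this] at h0
    rw [h0]

lemma full_class [Fintype F] (hq : 5 ≤ Fintype.card F) (A : GL (Fin 4) F) (hA : InG A) :
    ∃ (x : Option F) (c e : F) (he : e ≠ 0), ∀ W,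
      projAct F A W = projAct F (gT x) (projAct F (gM c) (projAct F (gD e he) W)) := by
  obtain ⟨x, hx⟩ := T_zero _ (hA.maps C_zero)
  obtain ⟨c, e, he, h⟩ := fix_class hq (A * (gT x)⁻¹) (hA.mul (InG_T x).inv)
    (by rw [pa_mul, ← hx, pa_inv])
  refine ⟨x, c, e, he, fun W => ?_⟩
  rw [← h, pa_mul, pa_inv']

/-! ### lines -/

def LL (b c : F) : Submodule F (Fin 4 → F) := span F {![0, 0, 0, 1], ![1, b, c, 0]}

lemma mem_LL {b c : F} {v : Fin 4 → F} : v ∈ LL b c ↔ v 1 = v 0 * b ∧ v 2 = v 0 * c := by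
  unfold LL
  rw [Submodule.mem_span_pair]
  constructor
  · rintro ⟨α, β, rfl⟩; simp
  · rintro ⟨h1, h2⟩
    refine ⟨v 3, v 0, ?_⟩
    ext i; fin_cases i <;> simp [h1, h2]

lemma LL_inj {b c b' c' : F} (h : LL b c = LL b' c') : b = b' ∧ c = c' := by
  have : ![1, b, c, 0] ∈ LL b' c' := by rw [← h, mem_LL]; simp
  rw [mem_LL] at this
  simpa using this

lemma span_le_iff {v : Fin 4 → F} {W : Submodule F (Fin 4 → F)} : span F {v} ≤ W ↔ v ∈ W :=
  Submodule.span_singleton_le_iff_mem v W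

lemma LL_zero_le (b c : F) : span F {![0, 0, 0, 1]} ≤ LL b c := by
  rw [span_le_iff, mem_LL]; simp

lemma LL_uniq {b c : F} (h : c ≠ b ^ 2) {P} (hP : P ∈ twistedCubic F) (hl : P ≤ LL b c) :
    P = span F {![0, 0, 0, 1]} := by
  rcases C_cases' hP with ⟨s, rfl⟩ | rfl
  · rw [span_le_iff, mem_LL] at hl
    simp at hl
    exact absurd (by rw [← hl.1, ← hl.2]) h
  · rfl

lemma LL_finrank (b c : F) : Module.finrank F (LL b c) = 2 := by
  have : LinearIndependent F ![(![0, 0, 0, 1] : Fin 4 → F), ![1, b, c, 0]] := by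
    rw [LinearIndependent.pair_iff]
    intro s t h
    have h0 := congrFun h 0
    have h3 := congrFun h 3
    simp at h0 h3
    exact ⟨h3, h0⟩
  have h := finrank_span_eq_card this
  have hr : Set.range ![(![0, 0, 0, 1] : Fin 4 → F), ![1, b, c, 0]] =
      {![0, 0, 0, 1], ![1, b, c, 0]} := by
    ext v
    simp only [Set.mem_range, Fin.exists_fin_two, Set.mem_insert_iff, Set.mem_singleton_iff]
    exact or_congr eq_comm eq_comm
  rw [hr] at h
  exact h.trans (Fintype.card_fin 2)

lemma pa_osc (A : GL (Fin 4) F) (c c' : Fin 4 → F)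
    (h : ∀ y : Fin 4 → F, planeForm F c (y ᵥ* (A : Matrix (Fin 4) (Fin 4) F)) = 0 ↔ planeForm F c' y = 0)  :
    projAct F A (planeOf F c') = planeOf F c := by
  have h1 : ∀ W : Submodule F (Fin 4 → F), projAct F A (W.comap (Matrix.vecMulLinear (A : Matrix (Fin 4) (Fin 4) F))) = W := by
    intro W
    apply Submodule.map_comap_eq_of_surjective
    intro y
    refine ⟨y ᵥ* ((A⁻¹ : GL (Fin 4) F) : Matrix (Fin 4) (Fin 4) F), ?_⟩
    simp [Matrix.vecMul_vecMul]
  rw [← h1 (planeOf F c)]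
  congr 1
  ext y
  simp only [planeOf, LinearMap.mem_ker, Submodule.mem_comap]
  exact (h y).symm

lemma osc_N (x : F) {π} (h : isOscPlane F π) : isOscPlane F (projAct F (gN x) π) := by
  rcases h with ⟨t, rfl⟩ | rfl
  · left; refine ⟨t + x, pa_osc _ _ _ fun y => ?_⟩
    have : y = ![y 0, y 1, y 2, y 3] := by ext i; fin_cases i <;> rfl
    rw [this, vecN]
    simp [planeForm]
    ring_nf
  · right; refine pa_osc _ _ _ fun y => ?_
    have : y = ![y 0, y 1, y 2, y 3] := by ext i; fin_cases i <;> rfl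
    rw [this, vecN]
    simp [planeForm]

lemma osc_W {π} (h : isOscPlane F π) : isOscPlane F (projAct F (gW F) π) := by
  rcases h with ⟨t, rfl⟩ | rfl
  · by_cases ht : t = 0
    · right; refine pa_osc _ _ _ fun y => ?_
      have : y = ![y 0, y 1, y 2, y 3] := by ext i; fin_cases i <;> rfl
      rw [this, vecW]
      simp [planeForm, ht]
    left; refine ⟨t⁻¹, pa_osc _ _ _ fun y => ?_⟩
    have : y = ![y 0, y 1, y 2, y 3] := by ext i; fin_cases i <;> rfl
    rw [this, vecW]
    simp [planeForm]
    have e : y 3 + -(3 * t⁻¹ * y 2) + 3 * (t ^ 2)⁻¹ * y 1 + -((t ^ 3)⁻¹ * y 0) =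
      (-(t ^ 3)⁻¹) * (y 0 + -(3 * t * y 1) + 3 * t ^ 2 * y 2 + -(t ^ 3 * y 3)) := by
      field_simp; ring
    rw [e]
    simp [ht]
  · left; refine ⟨0, pa_osc _ _ _ fun y => ?_⟩
    have : y = ![y 0, y 1, y 2, y 3] := by ext i; fin_cases i <;> rfl
    rw [this, vecW]
    simp [planeForm]

lemma osc_T (x : Option F) {π} (h : isOscPlane F π) : isOscPlane F (projAct F (gT x) π) := by
  cases x
  · exact osc_W h
  · exact osc_N _ h
lemma osc_T' (x : Option F) {π} (h : isOscPlane F π) : isOscPlane F (projAct F (gT x)⁻¹ π) := by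
  cases x
  · rw [gT, gW_inv]; exact osc_W h
  · rw [gT, gN_inv]; exact osc_N _ h

lemma unG_iff (ℓ : Submodule F (Fin 4 → F)) :
    isUnGamma F ℓ ↔ isUnisecant F ℓ ∧ ∀ π, isOscPlane F π → ¬ ℓ ≤ π := by
  refine ⟨fun h => ⟨h.1, h.2.2⟩, fun h => ⟨h.1, ?_, h.2⟩⟩
  rintro (⟨t, rfl⟩ | rfl)
  · refine h.2 _ (Or.inl ⟨t, rfl⟩) ?_
    unfold tangentAt
    rw [Submodule.span_le]
    rintro v (rfl | rfl) <;> simp [oscPlane, planeOf, planeForm] <;> ring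
  · refine h.2 _ (Or.inr rfl) ?_
    unfold tangentAtInf
    rw [Submodule.span_le]
    rintro v (rfl | rfl) <;> simp [oscPlaneInf, planeOf, planeForm]

lemma uni_pa (A : GL (Fin 4) F) (hA : InG A) {ℓ} (h : isUnisecant F ℓ) :
    isUnisecant F (projAct F A ℓ) := by
  obtain ⟨h1, P, ⟨hP, hl⟩, hu⟩ := h
  refine ⟨(pa_finrank A ℓ).trans h1, projAct F A P, ⟨hA.maps hP, pa_mono A hl⟩, ?_⟩
  rintro Q ⟨hQ, hQl⟩
  rw [← hu (projAct F A⁻¹ Q) ⟨hA.inv.maps hQ, by rw [← pa_le A, pa_inv']; exact hQl⟩, pa_inv']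

lemma unG_T (x : Option F) {ℓ} (h : isUnGamma F ℓ) : isUnGamma F (projAct F (gT x) ℓ) := by
  rw [unG_iff] at *
  refine ⟨uni_pa _ (InG_T x) h.1, fun π hπ hl => h.2 _ (osc_T' x hπ) ?_⟩
  rw [← pa_le (gT x), pa_inv']; exact hl
lemma unG_T' (x : Option F) {ℓ} (h : isUnGamma F ℓ) : isUnGamma F (projAct F (gT x)⁻¹ ℓ) := by
  rw [unG_iff] at *
  refine ⟨uni_pa _ (InG_T x).inv h.1, fun π hπ hl => h.2 _ (osc_T x hπ) ?_⟩
  rw [← pa_le (gT x)⁻¹, pa_inv]; exact hl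

lemma unG_LL {b c : F} (h : c ≠ b ^ 2) : isUnGamma F (LL b c) := by
  rw [unG_iff]
  refine ⟨⟨LL_finrank b c, _, ⟨C_zero, LL_zero_le b c⟩, fun P hP => LL_uniq h hP.1 hP.2⟩, ?_⟩
  intro π hπ hl
  have h1 : ![0, 0, 0, 1] ∈ π := hl (by rw [mem_LL]; simp)
  have h2 : ![1, b, c, 0] ∈ π := hl (by rw [mem_LL]; simp)
  rcases hπ with ⟨t, rfl⟩ | rfl
  · simp [oscPlane, planeOf, planeForm] at h1 h2
    simp [h1] at h2
  · simp [oscPlaneInf, planeOf, planeForm] at h1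

lemma unG_zero {ℓ} (h : isUnGamma F ℓ) (h0 : span F {![0, 0, 0, 1]} ≤ ℓ) :
    ∃ b c : F, c ≠ b ^ 2 ∧ ℓ = LL b c := by
  rw [unG_iff] at h
  obtain ⟨⟨hr, P, -, hu⟩, ho⟩ := h
  have h1 := ho _ (Or.inl ⟨0, rfl⟩)
  rw [SetLike.not_le_iff_exists] at h1
  obtain ⟨v, hv, hv0⟩ := h1
  simp [oscPlane, planeOf, planeForm] at hv0
  rw [span_le_iff] at h0
  have hw : ![1, v 1 / v 0, v 2 / v 0, 0] ∈ ℓ := by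
    have : ![1, v 1 / v 0, v 2 / v 0, 0] = (v 0)⁻¹ • v - (v 3 / v 0) • ![0, 0, 0, 1] := by
      ext i; fin_cases i <;> simp [hv0] <;> field_simp <;> simp
    rw [this]
    exact ℓ.sub_mem (ℓ.smul_mem _ hv) (ℓ.smul_mem _ h0)
  have hle : LL (v 1 / v 0) (v 2 / v 0) ≤ ℓ := by
    unfold LL
    rw [Submodule.span_le]
    rintro w (rfl | rfl)
    · exact h0
    · exact hw
  have heq := Submodule.eq_of_le_of_finrank_eq hle ((LL_finrank _ _).trans hr.symm)
  refine ⟨_, _, ?_, heq.symm⟩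
  generalize v 1 / v 0 = b at *
  generalize v 2 / v 0 = c at *
  rintro rfl
  subst heq
  have := (hu _ ⟨C_zero, LL_zero_le _ _⟩).trans (hu _ ⟨C_Q b, by rw [span_le_iff, mem_LL]; simp⟩).symm
  obtain ⟨k, hk⟩ := Submodule.mem_span_singleton.mp (this ▸ Submodule.mem_span_singleton_self (![0, 0, 0, 1] : Fin 4 → F))
  have h0 := congrFun hk 0
  have h3 := congrFun hk 3
  simp at h0 
  simp [h0] at h3

def phi (p : Option F × F × F) : Submodule F (Fin 4 → F) :=
  projAct F (gT p.1) (LL p.2.1 (p.2.1 ^ 2 + p.2.2))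

lemma phi_inj : Set.InjOn (phi (F := F)) {p | p.2.2 ≠ 0} := by
  rintro ⟨x, b, u⟩ hu ⟨y, b', u'⟩ hu' h
  simp only [Set.mem_setOf_eq] at hu hu'
  simp only [phi] at h
  have h1 : projAct F (gT x)⁻¹ (projAct F (gT y) (span F {![0, 0, 0, 1]})) ≤ LL b (b ^ 2 + u) := by
    rw [← pa_le (gT x), pa_inv', h, pa_le]; exact LL_zero_le _ _
  have h2 := LL_uniq (by simpa using hu) ((InG_T x).inv.maps ((InG_T y).maps C_zero)) h1
  have h3 : x = y := by
    apply T_inj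
    conv_lhs => rw [← h2]
    rw [pa_inv']
  subst h3
  obtain ⟨h4, h5⟩ := LL_inj (pa_inj _ h)
  subst h4
  simpa using h5

lemma unG_set : {ℓ : Submodule F (Fin 4 → F) | isUnGamma F ℓ} = phi '' {p | p.2.2 ≠ 0} := by
  ext ℓ
  constructor
  · intro h
    obtain ⟨-, P, ⟨hP, hl⟩, -⟩ := h.1
    obtain ⟨x, rfl⟩ := T_zero P hP
    obtain ⟨b, c, hbc, h2⟩ := unG_zero (unG_T' x h) (by rw [← pa_le (gT x), pa_inv']; exact hl)
    refine ⟨(x, b, c - b ^ 2), sub_ne_zero.mpr hbc, ?_⟩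
    simp only [phi]
    rw [add_sub_cancel, ← h2, pa_inv']
  · rintro ⟨⟨x, b, u⟩, hu, rfl⟩
    exact unG_T _ (unG_LL (by simpa using hu))

lemma pa_D_LL (e : F) (he : e ≠ 0) (u : F) : projAct F (gD e he) (LL 0 u) = LL 0 (u * e ^ 2) := by
  apply Submodule.eq_of_le_of_finrank_eq
  · unfold LL; rw [pa_span2, vecD, vecD, Submodule.span_le]
    rintro w (rfl | rfl) <;> rw [SetLike.mem_coe] <;> apply mem_LL.mpr <;> simp
    ring
  · rw [pa_finrank, LL_finrank, LL_finrank]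

lemma pa_M_LL (c u : F) : projAct F (gM c) (LL 0 u) = LL c (c ^ 2 + u) := by
  apply Submodule.eq_of_le_of_finrank_eq
  · unfold LL; rw [pa_span2, vecM, vecM, Submodule.span_le]
    rintro w (rfl | rfl) <;> rw [SetLike.mem_coe] <;> apply mem_LL.mpr <;> simp
    ring
  · rw [pa_finrank, LL_finrank, LL_finrank]

def sqs (r : F) : Set F := {u | ∃ e : F, e ≠ 0 ∧ u = r * e ^ 2}

lemma orbit_eq [Fintype F] (hq : 5 ≤ Fintype.card F) (r : F) :
    lineOrbit F (LL 0 r) = phi '' (Set.univ ×ˢ Set.univ ×ˢ sqs r) := by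
  ext ℓ
  constructor
  · rintro ⟨f, ⟨⟨A, rfl⟩, hA⟩, rfl⟩
    obtain ⟨x, c, e, he, h⟩ := full_class hq A hA
    refine ⟨(x, c, r * e ^ 2), ⟨trivial, trivial, e, he, rfl⟩, ?_⟩
    rw [h, pa_D_LL, pa_M_LL]; rfl
  · rintro ⟨⟨x, c, u⟩, ⟨-, -, e, he, hu⟩, rfl⟩
    simp only at hu
    subst hu
    refine ⟨projAct F (gD e he * gM c * gT x), ⟨⟨_, rfl⟩, ((InG_D e he).mul (InG_M c)).mul (InG_T x)⟩, ?_⟩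
    rw [pa_mul, pa_mul, pa_D_LL, pa_M_LL]; rfl

lemma sqs_ne {r : F} (hr : r ≠ 0) : (Set.univ ×ˢ Set.univ ×ˢ sqs r) ⊆ {p : Option F × F × F | p.2.2 ≠ 0} := by
  rintro ⟨x, c, u⟩ ⟨-, -, e, he, hu⟩
  simp only at hu
  simp [hu, hr, he]

lemma two_ne [Fintype F] (hodd : Odd (Fintype.card F)) : (2 : F) ≠ 0 := by
  apply Ring.two_ne_zero
  intro h
  have := FiniteField.even_card_of_char_two h
  rw [Nat.odd_iff] at hodd
  omega

lemma sqs_card [Fintype F] (hodd : Odd (Fintype.card F)) {r : F} (hr : r ≠ 0) :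
    2 * (sqs r).ncard = Fintype.card F - 1 := by
  classical
  have h2 := two_ne hodd
  have hs : sqs r = ((Finset.univ.erase (0:F)).image (fun e => r * e ^ 2) : Finset F) := by
    ext u; simp [sqs, eq_comm]
  rw [hs, Set.ncard_coe_finset]
  have h := Finset.card_eq_sum_card_image (fun e => r * e ^ 2) (Finset.univ.erase (0:F))
  rw [Finset.card_erase_of_mem (Finset.mem_univ _), Finset.card_univ] at h
  rw [h, Finset.sum_const_nat (m := 2), mul_comm]
  intro u hu
  obtain ⟨e, he, rfl⟩ := Finset.mem_image.mp hu
  have he : e ≠ 0 := Finset.ne_of_mem_erase he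
  have : (Finset.univ.erase (0:F)).filter (fun x => r * x ^ 2 = r * e ^ 2) = {e, -e} := by
    ext x
    simp [hr, sq_eq_sq_iff_eq_or_eq_neg]
    rintro (rfl | rfl) <;> simpa using he
  rw [this, Finset.card_pair]
  intro h
  apply h2
  have : 2 * e = 0 := by linear_combination h
  simpa [he] using this

lemma orbit_card [Fintype F] (hq : 5 ≤ Fintype.card F) (hodd : Odd (Fintype.card F)) {r : F} (hr : r ≠ 0) :
    (lineOrbit F (LL 0 r)).ncard = (Fintype.card F ^ 3 - Fintype.card F) / 2 := by
  rw [orbit_eq hq, Set.ncard_image_of_injOn (phi_inj.mono (sqs_ne hr)), Set.ncard_prod, Set.ncard_prod,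
    Set.ncard_univ, Set.ncard_univ, Nat.card_eq_fintype_card, Nat.card_eq_fintype_card, Fintype.card_option]
  have h := sqs_card hodd hr
  generalize Fintype.card F = q at *
  generalize (sqs r).ncard = m at *
  obtain rfl : q = 2 * m + 1 := by omega
  symm
  apply Nat.div_eq_of_eq_mul_left (by norm_num)
  apply Nat.sub_eq_of_eq_add
  ring

lemma pa_gD_one : projAct F (gD (1:F) one_ne_zero) = id := by
  have : gD (1:F) one_ne_zero = 1 := by
    apply Units.ext
    change matD 1 = 1
    ext i j
    fin_cases i <;> fin_cases j <;> simp [matD]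
  funext W
  rw [this, pa_one]; rfl

lemma stab_eq [Fintype F] (hq : 5 ≤ Fintype.card F) {r : F} (hr : r ≠ 0) :
    lineStab F (LL 0 r) = {f | ∃ d : F, (d = 1 ∨ d = -1) ∧ ∃ A : GL (Fin 4) F,
        (↑A : Matrix (Fin 4) (Fin 4) F) =
          !![1, 0, 0, 0; 0, d, 0, 0; 0, 0, d ^ 2, 0; 0, 0, 0, d ^ 3] ∧
        f = projAct F A} := by
  ext f
  constructor
  · rintro ⟨⟨⟨A, rfl⟩, hA⟩, hf⟩
    obtain ⟨x, c, e, he, h⟩ := full_class hq A hA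
    rw [h, pa_D_LL, pa_M_LL] at hf
    have h0 : LL 0 r = phi (some 0, 0, r) := by
      simp [phi, gT, gN_zero, pa_one]
    have h1 : phi (x, c, r * e ^ 2) = phi (some 0, 0, r) := by
      rw [← h0]; exact hf
    have h2 := phi_inj (by simp [hr, he]) (by simpa using hr) h1
    simp only [Prod.mk.injEq] at h2
    obtain ⟨rfl, rfl, h3⟩ := h2
    have h4 : e ^ 2 = 1 := by
      apply mul_left_cancel₀ hr; rw [h3, mul_one]
    refine ⟨e, (by simpa using h4), gD e he, rfl, ?_⟩
    funext W
    rw [h]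
    have : gM (0:F) = 1 := by
      unfold gM; rw [gN_zero, mul_one]; exact Units.ext matW_mul
    simp [gT, gN_zero, pa_one, this]
  · rintro ⟨d, hd, A, hA, rfl⟩
    have hd0 : d ≠ 0 := by rcases hd with rfl | rfl <;> simp
    have : A = gD d hd0 := Units.ext hA
    subst this
    refine ⟨⟨⟨_, rfl⟩, InG_D d hd0⟩, ?_⟩
    rw [pa_D_LL]
    rcases hd with rfl | rfl <;> simp

lemma stab_card [Fintype F] (hq : 5 ≤ Fintype.card F) (hodd : Odd (Fintype.card F)) {r : F} (hr : r ≠ 0) :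
    (lineStab F (LL 0 r)).ncard = 2 := by
  have hn : (-1 : F) ≠ 0 := by simp
  have : lineStab F (LL 0 r) = {projAct F (gD (1:F) one_ne_zero), projAct F (gD (-1:F) hn)} := by
    rw [stab_eq hq hr]
    ext f
    constructor
    · rintro ⟨d, rfl | rfl, A, hA, rfl⟩
      · left; congr 1; exact Units.ext hA
      · right; rw [Set.mem_singleton_iff]; congr 1; exact Units.ext hA
    · rintro (rfl | rfl)
      · exact ⟨1, Or.inl rfl, _, rfl, rfl⟩
      · exact ⟨-1, Or.inr rfl, _, rfl, rfl⟩
  rw [this, Set.ncard_pair]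
  intro h
  have := congrFun h (span F {![1, 1, 1, 1]})
  rw [pa_span1, pa_span1, vecD, vecD] at this
  obtain ⟨k, hk⟩ := Submodule.mem_span_singleton.mp (this ▸ Submodule.mem_span_singleton_self _)
  have h0 := congrFun hk 0
  have h1 := congrFun hk 1
  simp at h0 h1
  apply two_ne hodd
  rw [h0] at h1
  linear_combination -h1

lemma nonsq_dichotomy [Fintype F] {ρ : F} (hρ : ¬ ∃ s : F, s ^ 2 = ρ) (u : F)
    (hu : u ≠ 0) : u ∈ sqs 1 ∨ u ∈ sqs ρ := by
  classical
  have hρ0 : ρ ≠ 0 := by rintro rfl; exact hρ ⟨0, by simp⟩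
  by_cases h : IsSquare u
  · left
    obtain ⟨e, rfl⟩ := h
    exact ⟨e, by simpa using hu, by ring⟩
  · right
    have h1 : ¬ IsSquare ρ := by
      rintro ⟨s, hs⟩; exact hρ ⟨s, by rw [hs]; ring⟩
    have : IsSquare (u * ρ) := by
      have a := quadraticChar_neg_one_iff_not_isSquare.mpr h
      have b := quadraticChar_neg_one_iff_not_isSquare.mpr h1
      rw [← quadraticChar_one_iff_isSquare (mul_ne_zero hu hρ0), map_mul, a, b]; norm_num
    obtain ⟨e, he⟩ := this
    refine ⟨e / ρ, div_ne_zero ?_ hρ0, ?_⟩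
    · rintro rfl; simp [hu, hρ0] at he
    · field_simp; rw [sq, ← he]

end

theorem stmt_15 (q : ℕ) (F : Type) [Field F] [Fintype F]
    (hcard : Fintype.card F = q) (hq : 5 ≤ q) (hodd : Odd q)
    (ρ : F) (hρ : ¬ ∃ s : F, s ^ 2 = ρ) :
    {ℓ : Submodule F (Fin 4 → F) | isUnGamma F ℓ} = lineOrbit F (Submodule.span F ({![0, 0, 0, 1], ![1, 0, 1, 0]} : Set (Fin 4 → F))) ∪ lineOrbit F (Submodule.span F ({![0, 0, 0, 1], ![1, 0, ρ, 0]} : Set (Fin 4 → F))) ∧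
    lineOrbit F (Submodule.span F ({![0, 0, 0, 1], ![1, 0, 1, 0]} : Set (Fin 4 → F))) ≠ lineOrbit F (Submodule.span F ({![0, 0, 0, 1], ![1, 0, ρ, 0]} : Set (Fin 4 → F))) ∧
    (lineOrbit F (Submodule.span F ({![0, 0, 0, 1], ![1, 0, 1, 0]} : Set (Fin 4 → F)))).ncard = (q ^ 3 - q) / 2 ∧
    (lineOrbit F (Submodule.span F ({![0, 0, 0, 1], ![1, 0, ρ, 0]} : Set (Fin 4 → F)))).ncard = (q ^ 3 - q) / 2 ∧
    lineStab F (Submodule.span F ({![0, 0, 0, 1], ![1, 0, 1, 0]} : Set (Fin 4 → F))) = lineStab F (Submodule.span F ({![0, 0, 0, 1], ![1, 0, ρ, 0]} : Set (Fin 4 → F))) ∧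
    lineStab F (Submodule.span F ({![0, 0, 0, 1], ![1, 0, 1, 0]} : Set (Fin 4 → F))) =
      {f | ∃ d : F, (d = 1 ∨ d = -1) ∧ ∃ A : GL (Fin 4) F,
        (↑A : Matrix (Fin 4) (Fin 4) F) =
          !![1, 0, 0, 0; 0, d, 0, 0; 0, 0, d ^ 2, 0; 0, 0, 0, d ^ 3] ∧
        f = projAct F A} ∧
    (lineStab F (Submodule.span F ({![0, 0, 0, 1], ![1, 0, 1, 0]} : Set (Fin 4 → F)))).ncard = 2 := by
  subst hcard
  have hρ0 : ρ ≠ 0 := by rintro rfl; exact hρ ⟨0, by simp⟩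
  change {ℓ | isUnGamma F ℓ} = lineOrbit F (LL 0 1) ∪ lineOrbit F (LL 0 ρ) ∧
    lineOrbit F (LL 0 1) ≠ lineOrbit F (LL 0 ρ) ∧ (lineOrbit F (LL 0 1)).ncard = _ ∧
    (lineOrbit F (LL 0 ρ)).ncard = _ ∧ lineStab F (LL 0 1) = lineStab F (LL 0 ρ) ∧
    lineStab F (LL 0 1) = _ ∧ (lineStab F (LL 0 1)).ncard = 2
  refine ⟨?_, ?_, orbit_card hq hodd one_ne_zero, orbit_card hq hodd hρ0,
    (stab_eq hq one_ne_zero).trans (stab_eq hq hρ0).symm, stab_eq hq one_ne_zero,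
    stab_card hq hodd one_ne_zero⟩
  · rw [unG_set, orbit_eq hq, orbit_eq hq, ← Set.image_union]
    congr 1
    apply Set.Subset.antisymm
    · rintro ⟨x, c, u⟩ hu
      rcases nonsq_dichotomy hρ u hu with h | h
      · exact Or.inl ⟨trivial, trivial, h⟩
      · exact Or.inr ⟨trivial, trivial, h⟩
    · exact Set.union_subset (sqs_ne one_ne_zero) (sqs_ne hρ0)
  · intro h
    rw [orbit_eq hq, orbit_eq hq] at h
    have h1 : phi (none, (0:F), (1:F)) ∈ phi '' (Set.univ ×ˢ Set.univ ×ˢ sqs (1:F)) :=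
      ⟨_, ⟨trivial, trivial, 1, one_ne_zero, by simp⟩, rfl⟩
    rw [h] at h1
    obtain ⟨p, hp, hpe⟩ := h1
    have h2 := phi_inj (sqs_ne hρ0 hp) (by simp) hpe
    subst h2
    obtain ⟨-, -, e, he, h3⟩ := hp
    simp only at h3
    refine hρ ⟨e⁻¹, ?_⟩
    field_simp
    linear_combination h3
end

section
/- Let q ≡ 0 (mod 3) be a prime power with q ≥ 9. The group G_q acts transitively on the points of the axis ℓ_A of Γ, i.e. for any two points R, S on the line with equations x0 = x3 = 0 there exists φ ∈ G_q with Rφ = S. -/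
open Matrix Submodule

def mat17 (F : Type) [Field F] (a b c d : F) : Matrix (Fin 4) (Fin 4) F :=
  !![a^3, a^2*c, a*c^2, c^3;
     0, a*(a*d-b*c), -(c*(a*d-b*c)), 0;
     0, -(b*(a*d-b*c)), d*(a*d-b*c), 0;
     b^3, b^2*d, b*d^2, d^3]

lemma mat17_det (F : Type) [Field F] (h3 : (3:F) = 0) (a b c d : F) :
    (mat17 F a b c d).det = (a*d-b*c)^6 := by
  simp [mat17, Matrix.det_succ_row_zero, Fin.sum_univ_succ, Fin.succAbove]
  linear_combination (a*d-b*c)^3 * (a*d*b*c*(a*d-b*c)) * h3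

lemma mat17_cubic (F : Type) [Field F] (h3 : (3:F) = 0) (a b c d s u : F) :
    ![s^3, s^2*u, s*u^2, u^3] ᵥ* (mat17 F a b c d) =
      ![(a*s+b*u)^3, (a*s+b*u)^2*(c*s+d*u), (a*s+b*u)*(c*s+d*u)^2, (c*s+d*u)^3] := by
  ext i
  fin_cases i <;> simp [mat17, Matrix.vecMul, dotProduct, Fin.sum_univ_succ]
  · linear_combination (-(a^2*b*s^2*u) - a*b^2*s*u^2) * h3
  · linear_combination (-(a*b*c*s^2*u + a*b*d*s*u^2)) * h3
  · linear_combination (-(a*c*d*s^2*u + b*c*d*s*u^2)) * h3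
  · linear_combination (-(c^2*d*s^2*u) - c*d^2*s*u^2) * h3

lemma mat17_axis (F : Type) [Field F] (a b c d x y : F) :
    ![0, x, y, 0] ᵥ* (mat17 F a b c d) =
      (a*d-b*c) • ![0, a*x-b*y, d*y-c*x, 0] := by
  ext i
  fin_cases i <;> simp [mat17, Matrix.vecMul, dotProduct, Fin.sum_univ_succ] <;> ring

lemma mem_cubic17 (F : Type) [Field F] (s u : F) (h : ¬ (s = 0 ∧ u = 0)) :
    Submodule.span F {![s^3, s^2*u, s*u^2, u^3]} ∈ twistedCubic F := by
  by_cases hu : u = 0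
  · have hs : s ≠ 0 := fun hs => h ⟨hs, hu⟩
    refine ⟨![1,0,0,0], Or.inr rfl, ?_⟩
    have : ![s^3, s^2*u, s*u^2, u^3] = (s^3) • ![1,0,0,0] := by
      ext i; fin_cases i <;> simp [hu]
    simp only [this]
    exact (Submodule.span_singleton_smul_eq (pow_ne_zero 3 hs).isUnit _).symm
  · refine ⟨_, Or.inl ⟨s/u, rfl⟩, ?_⟩
    have : ![s^3, s^2*u, s*u^2, u^3] = (u^3) • ![(s/u)^3,(s/u)^2,s/u,1] := by
      ext i; fin_cases i <;> simp <;> field_simp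
    simp only [this]
    exact (Submodule.span_singleton_smul_eq (pow_ne_zero 3 hu).isUnit _).symm

lemma exists_Gq17 (F : Type) [Field F] [Fintype F] (h3 : (3:F) = 0) (a b c d x y : F)
    (hd : a*d-b*c ≠ 0) :
    ∃ f ∈ Gq F, f (Submodule.span F {![0,x,y,0]}) =
      Submodule.span F {![0, a*x-b*y, d*y-c*x, 0]} := by
  have hdet : (mat17 F a b c d).det ≠ 0 := by
    rw [mat17_det F h3]; exact pow_ne_zero _ hd
  let A : GL (Fin 4) F := Matrix.GeneralLinearGroup.mkOfDetNeZero _ hdet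
  have hA : (A : Matrix (Fin 4) (Fin 4) F) = mat17 F a b c d := rfl
  have key : ∀ v, projAct F A (Submodule.span F {v}) =
      Submodule.span F {v ᵥ* mat17 F a b c d} := by
    intro v
    simp [projAct, Submodule.map_span, hA]
  have hinj : Function.Injective (projAct F A) := by
    apply Submodule.map_injective_of_injective
    exact Matrix.vecMul_injective_of_isUnit A.isUnit
  have hne : ∀ s u : F, ¬ (s = 0 ∧ u = 0) → ¬ (a*s+b*u = 0 ∧ c*s+d*u = 0) := by
    rintro s u h ⟨h1, h2⟩
    refine h ⟨?_, ?_⟩ <;> apply (mul_eq_zero.1 (?_ : (a*d-b*c) * _ = 0)).resolve_left hd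
    · linear_combination d * h1 - b * h2
    · linear_combination a * h2 - c * h1
  have hsub : projAct F A '' twistedCubic F ⊆ twistedCubic F := by
    rintro _ ⟨_, ⟨v, hv, rfl⟩, rfl⟩
    have : ∃ s u : F, ¬ (s = 0 ∧ u = 0) ∧ v = ![s^3, s^2*u, s*u^2, u^3] := by
      rcases hv with ⟨t, rfl⟩ | rfl
      · exact ⟨t, 1, by simp, by simp⟩
      · exact ⟨1, 0, by simp, by simp⟩
    obtain ⟨s, u, hsu, rfl⟩ := this
    simp only [key]
    rw [mat17_cubic F h3]
    exact mem_cubic17 F _ _ (hne s u hsu)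
  refine ⟨projAct F A, ⟨⟨A, rfl⟩, ?_⟩, ?_⟩
  · apply Set.eq_of_subset_of_ncard_le hsub _ (Set.toFinite _)
    rw [Set.ncard_image_of_injective _ hinj]
  · rw [key, mat17_axis]
    exact Submodule.span_singleton_smul_eq hd.isUnit _

lemma point17 (F : Type) [Field F] (R : Submodule F (Fin 4 → F)) (h : isPoint F R)
    (hR : R ≤ axisLine F) :
    ∃ x y : F, ¬ (x = 0 ∧ y = 0) ∧ R = Submodule.span F {![0,x,y,0]} := by
  obtain ⟨v, hv, hv0, hs⟩ : ∃ v, v ∈ R ∧ v ≠ 0 ∧ R = Submodule.span F {v} := by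
    obtain ⟨w, hw0, hw⟩ := finrank_eq_one_iff'.1 h
    refine ⟨w, w.2, by simpa using hw0, le_antisymm ?_ ?_⟩
    · intro z hz
      obtain ⟨k, hk⟩ := hw ⟨z, hz⟩
      exact Submodule.mem_span_singleton.2 ⟨k, congrArg Subtype.val hk⟩
    · simp
  obtain ⟨x, y, rfl⟩ := Submodule.mem_span_pair.1 (hR hv)
  have e : x • ![0,1,0,0] + y • ![0,0,1,0] = ![0,x,y,0] := by
    ext i; fin_cases i <;> simp
  rw [e] at hs hv0
  refine ⟨x, y, ?_, hs⟩
  rintro ⟨rfl, rfl⟩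
  apply hv0
  ext i; fin_cases i <;> simp

theorem stmt_17 (q : ℕ) (F : Type) [Field F] [Fintype F]
    (hcard : Fintype.card F = q) (hq : 9 ≤ q) (hq3 : q % 3 = 0) :
    ∀ R S : Submodule F (Fin 4 → F), isPoint F R → isPoint F S →
      R ≤ axisLine F → S ≤ axisLine F → ∃ f ∈ Gq F, f R = S := by
  have h3 : (3:F) = 0 := by
    have h := FiniteField.cast_card_eq_zero F
    obtain ⟨p, hp⟩ := CharP.exists F
    obtain ⟨n, hpp, hn⟩ := FiniteField.card F p
    have h3p : 3 ∣ p ^ (n:ℕ) := by rw [← hn, hcard]; omega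
    have := (Nat.prime_dvd_prime_iff_eq Nat.prime_three hpp).1
      (Nat.prime_three.dvd_of_dvd_pow h3p)
    subst this
    exact_mod_cast CharP.cast_eq_zero F 3
  intro R S hR hS hRA hSA
  obtain ⟨x, y, hxy, rfl⟩ := point17 F R hR hRA
  obtain ⟨z, w, hzw, rfl⟩ := point17 F S hS hSA
  have : ∃ a b c d : F, a*d-b*c ≠ 0 ∧ a*x-b*y = z ∧ d*y-c*x = w := by
    by_cases hx : x = 0
    · have hy : y ≠ 0 := fun hy => hxy ⟨hx, hy⟩
      by_cases hw : w = 0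
      · have hz : z ≠ 0 := fun hz => hzw ⟨hz, hw⟩
        refine ⟨0, -z/y, 1, 0, ?_, ?_, ?_⟩
        · simp [hz, hy]
        · field_simp; simp
        · simp [hx, hw]
      · refine ⟨1, -z/y, 0, w/y, ?_, ?_, ?_⟩
        · simp [hw, hy]
        · field_simp; simp [hx]
        · field_simp; simp
    · by_cases hz : z = 0
      · have hw : w ≠ 0 := fun hw => hzw ⟨hz, hw⟩
        refine ⟨y, x, -w/x, 0, ?_, ?_, ?_⟩
        · field_simp; simpa using hw
        · rw [hz]; ring
        · field_simp; ring
      · refine ⟨z/x, 0, (y-w)/x, 1, ?_, ?_, ?_⟩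
        · simp [hz, hx]
        · field_simp; simp
        · field_simp; ring
  obtain ⟨a, b, c, d, hd, rfl, rfl⟩ := this
  exact exists_Gq17 F h3 a b c d x y hd
end

section
/- Let q ≡ 0 (mod 3) be a prime power with q ≥ 9, and let ρ ∈ F_q be a non-square. The line ℓ1 through (0:1:0:0) and (0:0:1:1), the line ℓ2 through (0:1:0:0) and (1:0:1:0), and the line ℓ3 through (0:1:0:0) and (1:0:ρ:0) are EA-lines of the twisted cubic C, i.e. each is an external line, other than an imaginary chord and other than the axis ℓ_A, meeting ℓ_A (each meets ℓ_A in the point (0:1:0:0)). -/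
open Matrix Submodule

theorem ea_aux (q : ℕ) (F : Type) [Field F] (K : Type) [Field K] [Algebra F K]
    (a b c : F) (hb : b ≠ 0) (hac : a ≠ 0 ∨ c ≠ 0)
    (h : ∀ t : K, t ^ 3 * algebraMap F K c = algebraMap F K a →
      t * algebraMap F K c = algebraMap F K b → False) :
    isEA F K q (Submodule.span F ({![0, 1, 0, 0], ![a, 0, b, c]} : Set (Fin 4 → F))) ∧
    Submodule.span F ({![0, 1, 0, 0], ![a, 0, b, c]} : Set (Fin 4 → F)) ⊓ axisLine F
      = Submodule.span F ({![0, 1, 0, 0]} : Set (Fin 4 → F)) := by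
  have hinf : Submodule.span F ({![0, 1, 0, 0], ![a, 0, b, c]} : Set (Fin 4 → F)) ⊓ axisLine F
      = Submodule.span F ({![0, 1, 0, 0]} : Set (Fin 4 → F)) := by
    apply le_antisymm
    · rintro x ⟨hx1, hx2⟩
      obtain ⟨α, β, rfl⟩ := Submodule.mem_span_pair.1 hx1
      obtain ⟨γ, δ, hx⟩ := Submodule.mem_span_pair.1 hx2
      have h0 := congrFun hx 0
      have h3 := congrFun hx 3
      simp at h0 h3
      have hβ : β = 0 := by
        rcases hac with h | h
        · exact h0.resolve_right h
        · exact h3.resolve_right h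
      subst hβ
      exact Submodule.mem_span_singleton.2 ⟨α, by simp⟩
    · rw [Submodule.span_singleton_le_iff_mem]
      exact ⟨Submodule.subset_span (by simp), Submodule.subset_span (by simp)⟩
  have hext : isExternal F (Submodule.span F ({![0, 1, 0, 0], ![a, 0, b, c]} : Set (Fin 4 → F))) := by
    constructor
    · unfold isLine
      have hli : LinearIndependent F (![![0, 1, 0, 0], ![a, 0, b, c]] : Fin 2 → (Fin 4 → F)) := by
        rw [LinearIndependent.pair_iff]
        intro s t hst
        have h1 := congrFun hst 1
        have h2 := congrFun hst 2
        simp at h1 h2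
        exact ⟨h1, h2.resolve_right hb⟩
      have := finrank_span_eq_card hli
      have hr : Set.range (![![0, 1, 0, 0], ![a, 0, b, c]] : Fin 2 → (Fin 4 → F)) =
          {![0, 1, 0, 0], ![a, 0, b, c]} := Matrix.range_cons_cons_empty _ _ _
      rw [hr] at this
      simpa using this
    · rintro P ⟨v, hv, rfl⟩ hP
      simp only [Submodule.span_singleton_le_iff_mem] at hP
      obtain ⟨α, β, hx⟩ := Submodule.mem_span_pair.1 hP
      rcases hv with ⟨t, rfl⟩ | rfl
      · have h0 := congrFun hx 0
        have h2 := congrFun hx 2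
        have h3 := congrFun hx 3
        simp at h0 h2 h3
        apply h (algebraMap F K t)
        · rw [← map_pow, ← map_mul]; congr 1
          rw [← h0]; linear_combination a * h3
        · rw [← map_mul]; congr 1
          rw [← h2]; linear_combination b * h3
      · have h0 := congrFun hx 0
        have h2 := congrFun hx 2
        simp [hb] at h0 h2
        simp [h2] at h0
  refine ⟨⟨hext, ?_, ?_, ?_⟩, hinf⟩
  · rintro ⟨-, t, -, ht⟩
    have hm : (![t ^ 3, t ^ 2, t, 1] : Fin 4 → K) ∈ extendSub F K
        (Submodule.span F ({![0, 1, 0, 0], ![a, 0, b, c]} : Set (Fin 4 → F))) := by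
      rw [ht]; exact Submodule.subset_span (by simp)
    have hle : extendSub F K
        (Submodule.span F ({![0, 1, 0, 0], ![a, 0, b, c]} : Set (Fin 4 → F))) ≤
        Submodule.span K ({![0, 1, 0, 0],
          ![algebraMap F K a, 0, algebraMap F K b, algebraMap F K c]} : Set (Fin 4 → K)) := by
      unfold extendSub
      rw [Submodule.span_le]
      rintro _ ⟨v, hv, rfl⟩
      obtain ⟨α, β, rfl⟩ := Submodule.mem_span_pair.1 hv
      refine Submodule.mem_span_pair.2 ⟨algebraMap F K α, algebraMap F K β, ?_⟩
      funext i
      fin_cases i <;> simp [Algebra.smul_def]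
    obtain ⟨α, β, hx⟩ := Submodule.mem_span_pair.1 (hle hm)
    have h0 := congrFun hx 0
    have h2 := congrFun hx 2
    have h3 := congrFun hx 3
    simp at h0 h2 h3
    apply h t
    · rw [← h0]; linear_combination algebraMap F K a * h3
    · rw [← h2]; linear_combination algebraMap F K b * h3
  · intro he
    rw [he, inf_idem] at hinf
    have hm : (![0, 0, 1, 0] : Fin 4 → F) ∈ axisLine F := Submodule.subset_span (by simp)
    rw [hinf] at hm
    obtain ⟨α, hx⟩ := Submodule.mem_span_singleton.1 hm
    have h2 := congrFun hx 2
    simp at h2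
  · rw [hinf, Ne, Submodule.span_singleton_eq_bot]
    intro hx
    have h1 := congrFun hx 1
    simp at h1

theorem stmt_18 (q : ℕ) (F : Type) [Field F] [Fintype F]
    (hcard : Fintype.card F = q) (K : Type) [Field K] [Fintype K] [Algebra F K] (hcardK : Fintype.card K = q ^ 2) (hq : 9 ≤ q) (hq3 : q % 3 = 0)
    (ρ : F) (hρ : ¬ ∃ s : F, s ^ 2 = ρ) :
    ∀ ℓ ∈ ({Submodule.span F ({![0, 1, 0, 0], ![0, 0, 1, 1]} : Set (Fin 4 → F)), Submodule.span F ({![0, 1, 0, 0], ![1, 0, 1, 0]} : Set (Fin 4 → F)), Submodule.span F ({![0, 1, 0, 0], ![1, 0, ρ, 0]} : Set (Fin 4 → F))} : Set (Submodule F (Fin 4 → F))),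
      isEA F K q ℓ ∧ ℓ ⊓ axisLine F = Submodule.span F ({![0, 1, 0, 0]} : Set (Fin 4 → F)) := by
  have hρ0 : ρ ≠ 0 := fun h0 => hρ ⟨0, by simp [h0]⟩
  intro ℓ hℓ
  rcases hℓ with rfl | rfl | rfl
  · exact ea_aux q F K 0 1 1 one_ne_zero (Or.inr one_ne_zero) (by
      intro t h1 h2
      simp at h1 h2
      simp [h1] at h2)
  · exact ea_aux q F K 1 1 0 one_ne_zero (Or.inl one_ne_zero) (by
      intro t h1 h2
      simp at h1)
  · exact ea_aux q F K 1 ρ 0 hρ0 (Or.inl one_ne_zero) (by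
      intro t h1 h2
      simp at h1)
end
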